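/- arXiv:1806.04369 — 3 statements merged into one kernel-verified Lean document; each statement's English description precedes it below -/
import Mathlib

section
/- Let p be an odd prime and let d, e, f be positive integers with either 1 ≤ d ≤ f ≤ e ≤ d+f or 1 ≤ f < d < e ≤ d+f, and let G = M₁(p,d,e,f). If d = e, the number of exact (p^e, p^e)-bicyclic pairs of G equals p^{4e−3}(p²−1)(p−1); if d < e, the number of exact (p^d, p^e)-bicyclic pairs of G equals p^{3d+e−2}(p−1)². -/
/-- Relators for the group `M₁(p,d,e,f) = ⟨a, b ∣ a^(p^e) = b^(p^d) = 1, b⁻¹ab = a^(1+p^f)⟩`,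
where `a` is generator `0` and `b` is generator `1`. -/
def M1rels (p d e f : ℕ) : Set (FreeGroup (Fin 2)) :=
  {FreeGroup.of 0 ^ p ^ e, FreeGroup.of 1 ^ p ^ d,
    (FreeGroup.of 1)⁻¹ * FreeGroup.of 0 * FreeGroup.of 1 * (FreeGroup.of 0 ^ (1 + p ^ f))⁻¹}

/-- The metacyclic group `M₁(p,d,e,f) = ⟨a, b ∣ a^(p^e) = b^(p^d) = 1, b⁻¹ab = a^(1+p^f)⟩`. -/
abbrev M1 (p d e f : ℕ) : Type := PresentedGroup (M1rels p d e f)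

/-- The canonical generator `a` of `M₁(p,d,e,f)`. -/
def M1a (p d e f : ℕ) : M1 p d e f := PresentedGroup.of 0

/-- The canonical generator `b` of `M₁(p,d,e,f)`. -/
def M1b (p d e f : ℕ) : M1 p d e f := PresentedGroup.of 1

/-- Relators for the group `M₂(p,d,e,f) = ⟨a, b ∣ a^(p^d) = b^(p^e) = 1, b⁻¹ab = a^(1+p^f)⟩`,
where `a` is generator `0` and `b` is generator `1`. -/
def M2rels (p d e f : ℕ) : Set (FreeGroup (Fin 2)) :=
  {FreeGroup.of 0 ^ p ^ d, FreeGroup.of 1 ^ p ^ e,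
    (FreeGroup.of 1)⁻¹ * FreeGroup.of 0 * FreeGroup.of 1 * (FreeGroup.of 0 ^ (1 + p ^ f))⁻¹}

/-- The metacyclic group `M₂(p,d,e,f) = ⟨a, b ∣ a^(p^d) = b^(p^e) = 1, b⁻¹ab = a^(1+p^f)⟩`. -/
abbrev M2 (p d e f : ℕ) : Type := PresentedGroup (M2rels p d e f)

/-- The canonical generator `a` of `M₂(p,d,e,f)`. -/
def M2a (p d e f : ℕ) : M2 p d e f := PresentedGroup.of 0

/-- The canonical generator `b` of `M₂(p,d,e,f)`. -/
def M2b (p d e f : ℕ) : M2 p d e f := PresentedGroup.of 1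

/-- Relators for the group
`M₃(p,d,e,h,f) = ⟨a, b ∣ a^(p^h) = 1, b^(p^(d+e-h)) = a^(p^d), b⁻¹ab = a^(1+p^f)⟩`,
where `a` is generator `0` and `b` is generator `1`. -/
def M3rels (p d e h f : ℕ) : Set (FreeGroup (Fin 2)) :=
  {FreeGroup.of 0 ^ p ^ h, FreeGroup.of 1 ^ p ^ (d + e - h) * (FreeGroup.of 0 ^ p ^ d)⁻¹,
    (FreeGroup.of 1)⁻¹ * FreeGroup.of 0 * FreeGroup.of 1 * (FreeGroup.of 0 ^ (1 + p ^ f))⁻¹}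

/-- The non-split metacyclic group
`M₃(p,d,e,h,f) = ⟨a, b ∣ a^(p^h) = 1, b^(p^(d+e-h)) = a^(p^d), b⁻¹ab = a^(1+p^f)⟩`. -/
abbrev M3 (p d e h f : ℕ) : Type := PresentedGroup (M3rels p d e h f)

/-- The canonical generator `a` of `M₃(p,d,e,h,f)`. -/
def M3a (p d e h f : ℕ) : M3 p d e h f := PresentedGroup.of 0

/-- The canonical generator `b` of `M₃(p,d,e,h,f)`. -/
def M3b (p d e h f : ℕ) : M3 p d e h f := PresentedGroup.of 1

/-- `(α, β)` is an exact `(m,n)`-bicyclic pair of `G`: `α` has order `m`, `β` has order `n`,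
`⟨α⟩ ∩ ⟨β⟩ = 1`, and `G = ⟨α⟩⟨β⟩`. -/
def IsExactBicyclicPair {G : Type*} [Group G] (m n : ℕ) (α β : G) : Prop :=
  orderOf α = m ∧ orderOf β = n ∧
    Subgroup.zpowers α ⊓ Subgroup.zpowers β = ⊥ ∧
    ∀ g : G, ∃ i j : ℤ, g = α ^ i * β ^ j

/-!
Write every element of `G = ⟨b⟩⟨a⟩` as `b ^ k * a ^ l`. Since `b` acts on `⟨a⟩` by an exponent `r`
that is `1` modulo `p ^ f`, the sum `1 + r + ⋯ + r ^ (p - 1)` is `p` modulo `p ^ 2`, so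
`(b ^ k * a ^ l) ^ p ^ n` is `b ^ (k * p ^ n) * a ^ (p ^ n * l * u)` with `u` congruent to `1`
modulo `p`. Hence an element of order `p ^ d` has `l` divisible by `p ^ (e - d)`.

As `G` has order `p ^ (d + e)`, the pair `(x, y)` is exact as soon as `x` and `y` have the right
orders and `⟨x⟩ ∩ ⟨y⟩ = 1`, that is, as soon as `x ^ p ^ (d - 1)` and `y ^ p ^ (e - 1)` are
independent over `ZMod p`. These powers lie in the elementary abelian group generated by
`b ^ p ^ (d - 1)` and `a ^ p ^ (e - 1)`, where independence is the nonvanishing of a `2 × 2`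
determinant in the exponents modulo `p`; for `d < e` one off-diagonal entry vanishes. Counting
exponents is then counting invertible, respectively invertible triangular, matrices over `ZMod p`.

The condition `f + 2 ≤ p * f` says `1 ≤ f` for odd `p` and `2 ≤ f` for `p = 2`.
-/

open Finset Subgroup

theorem geom_sum_modEq_of_modEq_one {p f : ℕ} {r : ℤ} (hp : p.Prime) (hpf : f + 2 ≤ p * f)
    (hr : r ≡ 1 [ZMOD p ^ f]) : ∑ i ∈ range p, r ^ i ≡ p [ZMOD p ^ 2] := by
  have hf : f ≠ 0 := by rintro rfl; omega
  rcases hp.eq_two_or_odd' with rfl | hodd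
  · have hr4 : r ≡ 1 [ZMOD 2 ^ 2] := hr.of_dvd (pow_dvd_pow 2 (by omega))
    simpa [sum_range_succ, one_add_one_eq_two] using hr4.add_left 1
  · obtain ⟨m, hm⟩ : (p : ℤ) ∣ r - 1 := (dvd_pow_self _ hf).trans hr.symm.dvd
    obtain rfl : r = 1 + p * m := by linarith
    simpa using (Int.modEq_iff_dvd.mpr (odd_sq_dvd_geom_sum₂_sub (1 : ℤ) m hodd)).symm

section PowersInMetacyclicGroups

variable {G : Type*} [Group G] {a b : G} {r : ℤ}

theorem semiconjBy_pow_zpow_pow (h : SemiconjBy b (a ^ r) a) (k : ℕ) :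
    SemiconjBy (b ^ k) (a ^ r ^ k) a := by
  induction k with
  | zero => simp
  | succ k ih =>
    have hstep := h.zpow_right (r ^ k)
    rw [← zpow_mul, ← pow_succ'] at hstep
    rw [pow_succ b]
    exact ih.mul_left hstep

theorem mul_zpow_pow_eq_pow_mul_zpow_geom_sum (h : SemiconjBy b (a ^ r) a) (l : ℤ) (n : ℕ) :
    (b * a ^ l) ^ n = b ^ n * a ^ (l * ∑ i ∈ range n, r ^ i) := by
  induction n with
  | zero => simp
  | succ n ih =>
    have hconj := (h.zpow_right (l * ∑ i ∈ range n, r ^ i)).eq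
    rw [pow_succ, ih, mul_assoc, ← mul_assoc (a ^ _), ← hconj, ← zpow_mul, mul_assoc b, ← zpow_add,
      ← mul_assoc, ← pow_succ, geom_sum_succ]
    ring_nf

theorem exists_mul_zpow_pow_prime_pow {p f : ℕ} (hp : p.Prime) (hpf : f + 2 ≤ p * f)
    (hr : r ≡ 1 [ZMOD p ^ f]) (h : SemiconjBy b (a ^ r) a) (l : ℤ) (n : ℕ) :
    ∃ u : ℤ, u ≡ 1 [ZMOD p] ∧ (b * a ^ l) ^ p ^ n = b ^ p ^ n * a ^ (p ^ n * l * u) := by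
  induction n with
  | zero => exact ⟨1, rfl, by simp⟩
  | succ n ih =>
    obtain ⟨u, hu, hpow⟩ := ih
    have hrn : r ^ p ^ n ≡ 1 [ZMOD p ^ f] := by simpa using hr.pow (p ^ n)
    obtain ⟨w, hw⟩ := (geom_sum_modEq_of_modEq_one hp hpf hrn).symm.dvd
    refine ⟨u * (1 + p * w), ?_, ?_⟩
    · simpa using hu.mul (Int.modEq_iff_dvd.mpr ⟨-w, by ring⟩ : 1 + p * w ≡ 1 [ZMOD p])
    · rw [pow_succ, pow_mul, hpow,
        mul_zpow_pow_eq_pow_mul_zpow_geom_sum (semiconjBy_pow_zpow_pow h _), ← pow_mul,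
        sub_eq_iff_eq_add.mp hw]
      ring_nf

end PowersInMetacyclicGroups

section PowIndependent

variable {G : Type*} [Group G] {p : ℕ} {x y : G}

/-- Independence of `x` and `y` modulo `p`: if `x` and `y` commute and have exponent `p`, this is
linear independence over `ZMod p` in the elementary abelian group they generate. -/
def IsPowIndependent (p : ℕ) (x y : G) : Prop :=
  ∀ i j : ℤ, x ^ i * y ^ j = 1 → (p : ℤ) ∣ i ∧ (p : ℤ) ∣ j

theorem zpow_mul_zpow_mul_zpow_mul_zpow (hxy : Commute x y) (k l k' l' i j : ℤ) :
    (x ^ k * y ^ l) ^ i * (x ^ k' * y ^ l') ^ j =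
      x ^ (k * i + k' * j) * y ^ (l * i + l' * j) := by
  have hmid : Commute (y ^ (l * i)) (x ^ (k' * j)) := (hxy.zpow_zpow _ _).symm
  rw [(hxy.zpow_zpow k l).mul_zpow, (hxy.zpow_zpow k' l').mul_zpow]
  simp only [← zpow_mul]
  rw [hmid.mul_mul_mul_comm, ← zpow_add, ← zpow_add]

theorem isPowIndependent_zpow_mul_zpow_iff (hp : p.Prime) (hxy : Commute x y) (hx : x ^ p = 1)
    (hy : y ^ p = 1) (hind : IsPowIndependent p x y) (k l k' l' : ℤ) :
    IsPowIndependent p (x ^ k * y ^ l) (x ^ k' * y ^ l') ↔ ¬ (p : ℤ) ∣ k * l' - l * k' := by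
  have hp' : Prime (p : ℤ) := Nat.prime_iff_prime_int.mp hp
  have hrel (i j : ℤ) : (x ^ k * y ^ l) ^ i * (x ^ k' * y ^ l') ^ j = 1 ↔
      (p : ℤ) ∣ k * i + k' * j ∧ (p : ℤ) ∣ l * i + l' * j := by
    rw [zpow_mul_zpow_mul_zpow_mul_zpow hxy]
    refine ⟨hind _ _, fun ⟨⟨m, hm⟩, ⟨n, hn⟩⟩ => ?_⟩
    rw [hm, hn, zpow_mul, zpow_mul, zpow_natCast, zpow_natCast, hx, hy, one_zpow, one_zpow, one_mul]
  constructor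
  · intro hind' hdet
    have hl := hind' l' (-l) ((hrel _ _).mpr
      ⟨by rwa [mul_neg, ← sub_eq_add_neg, mul_comm k'], by simp [mul_comm]⟩)
    have hk := hind' k' (-k) ((hrel _ _).mpr
      ⟨by simp [mul_comm], by rwa [mul_neg, ← sub_eq_add_neg, dvd_sub_comm, mul_comm l']⟩)
    have hone := hind' 1 0 ((hrel _ _).mpr
      ⟨by simpa using hk.2, by simpa using hl.2⟩)
    exact hp'.not_dvd_one hone.1
  · intro hdet i j hij
    obtain ⟨hfst, hsnd⟩ := (hrel i j).mp hij
    constructor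
    · refine (hp'.dvd_or_dvd ?_).resolve_left hdet
      convert (hfst.mul_left l').sub (hsnd.mul_left k') using 1
      ring
    · refine (hp'.dvd_or_dvd ?_).resolve_left hdet
      convert (hsnd.mul_left k).sub (hfst.mul_left l) using 1
      ring

theorem orderOf_pow_prime_pow {m n : ℕ} (hp : p.Prime) (hx : orderOf x = p ^ (m + n)) :
    orderOf (x ^ p ^ m) = p ^ n := by
  rw [orderOf_pow_of_dvd (pow_ne_zero m hp.ne_zero) (hx ▸ pow_dvd_pow p (m.le_add_right n)), hx,
    pow_add, Nat.mul_div_cancel_left _ (pow_pos hp.pos m)]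

theorem orderOf_pow_prime_pow_eq_prime {n : ℕ} (hp : p.Prime) (hx : orderOf x = p ^ (n + 1)) :
    orderOf (x ^ p ^ n) = p := by
  simpa using orderOf_pow_prime_pow hp hx

theorem exists_zpow_eq_of_mem_zpowers_of_pow_eq_one {n : ℕ} {g : G} (hp : p.Prime)
    (hx : orderOf x = p ^ (n + 1)) (hgx : g ∈ zpowers x) (hg : g ^ p = 1) :
    ∃ i : ℤ, (x ^ p ^ n) ^ i = g := by
  obtain ⟨k, rfl⟩ := mem_zpowers_iff.mp hgx
  rw [← zpow_natCast, ← zpow_mul, ← orderOf_dvd_iff_zpow_eq_one, hx, pow_succ, Nat.cast_mul] at hg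
  obtain ⟨i, rfl⟩ := Int.dvd_of_mul_dvd_mul_right (mod_cast hp.ne_zero) hg
  exact ⟨i, by rw [zpow_mul, zpow_natCast]⟩

theorem IsPowIndependent.zpowers_inf_zpowers_eq_bot {m n : ℕ} (hp : p.Prime)
    (hx : orderOf x = p ^ (m + 1)) (hy : orderOf y = p ^ (n + 1))
    (hind : IsPowIndependent p (x ^ p ^ m) (y ^ p ^ n)) : zpowers x ⊓ zpowers y = ⊥ := by
  refine (eq_bot_iff_forall _).mpr fun g hg => ?_
  obtain ⟨k, -, hk⟩ := (Nat.dvd_prime_pow hp).mp (hx ▸ orderOf_dvd_of_mem_zpowers hg.1)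
  cases k with
  | zero => exact orderOf_eq_one_iff.mp (by simpa using hk)
  | succ k =>
    have hgo := orderOf_pow_prime_pow_eq_prime hp hk
    have hgp : (g ^ p ^ k) ^ p = 1 := by rw [← orderOf_dvd_iff_pow_eq_one, hgo]
    obtain ⟨i, hi⟩ := exists_zpow_eq_of_mem_zpowers_of_pow_eq_one hp hx (pow_mem hg.1 _) hgp
    obtain ⟨j, hj⟩ := exists_zpow_eq_of_mem_zpowers_of_pow_eq_one hp hy (pow_mem hg.2 _) hgp
    obtain ⟨i, rfl⟩ := (hind i (-j) (by rw [hi, zpow_neg, hj, mul_inv_cancel])).1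
    have hxp : (x ^ p ^ m) ^ p = 1 := by rw [← pow_mul, ← pow_succ, ← hx, pow_orderOf_eq_one]
    rw [zpow_mul, zpow_natCast, hxp, one_zpow] at hi
    rw [← hi, orderOf_one] at hgo
    exact absurd hgo.symm hp.ne_one

theorem isPowIndependent_pow_prime_pow_iff {m n : ℕ} (hp : p.Prime) (hx : x ^ p ^ (m + 1) = 1)
    (hy : y ^ p ^ (n + 1) = 1) : IsPowIndependent p (x ^ p ^ m) (y ^ p ^ n) ↔
      orderOf x = p ^ (m + 1) ∧ orderOf y = p ^ (n + 1) ∧ zpowers x ⊓ zpowers y = ⊥ := by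
  have := Fact.mk hp
  have hone : ¬ (p : ℤ) ∣ 1 := (Nat.prime_iff_prime_int.mp hp).not_dvd_one
  constructor
  · intro hind
    have hxo : orderOf x = p ^ (m + 1) :=
      orderOf_eq_prime_pow (fun hx1 => hone (hind 1 0 (by simp [hx1])).1) hx
    have hyo : orderOf y = p ^ (n + 1) :=
      orderOf_eq_prime_pow (fun hy1 => hone (hind 0 1 (by simp [hy1])).2) hy
    exact ⟨hxo, hyo, hind.zpowers_inf_zpowers_eq_bot hp hxo hyo⟩
  · rintro ⟨hxo, hyo, hdisj⟩ i j hij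
    have hmem : (x ^ p ^ m) ^ i ∈ zpowers x ⊓ zpowers y := by
      refine ⟨zpow_mem (npow_mem_zpowers x _) i, ?_⟩
      rw [eq_inv_of_mul_eq_one_left hij]
      exact (zpowers y).inv_mem (zpow_mem (npow_mem_zpowers y _) j)
    have hi : (x ^ p ^ m) ^ i = 1 := by rwa [hdisj, mem_bot] at hmem
    have hj : (y ^ p ^ n) ^ j = 1 := by rwa [hi, one_mul] at hij
    rw [← orderOf_dvd_iff_zpow_eq_one, orderOf_pow_prime_pow_eq_prime hp hxo] at hi
    rw [← orderOf_dvd_iff_zpow_eq_one, orderOf_pow_prime_pow_eq_prime hp hyo] at hj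
    exact ⟨hi, hj⟩

end PowIndependent

namespace IsExactBicyclicPair

variable {G : Type*} [Group G] {m n : ℕ} {x y : G}

theorem isComplement' (h : IsExactBicyclicPair m n x y) :
    IsComplement' (zpowers x) (zpowers y) := by
  refine isComplement'_of_disjoint_and_mul_eq_univ (disjoint_iff.mpr h.2.2.1)
    (Set.eq_univ_of_forall fun g => ?_)
  obtain ⟨i, j, rfl⟩ := h.2.2.2 g
  exact Set.mul_mem_mul (zpow_mem_zpowers x i) (zpow_mem_zpowers y j)

theorem natCard_eq (h : IsExactBicyclicPair m n x y) : Nat.card G = m * n := by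
  rw [← h.isComplement'.card_mul_card, Nat.card_zpowers, Nat.card_zpowers, h.1, h.2.1]

end IsExactBicyclicPair

theorem isExactBicyclicPair_iff_of_natCard_eq {G : Type*} [Group G] [Finite G] {m n : ℕ} {x y : G}
    (hG : Nat.card G = m * n) : IsExactBicyclicPair m n x y ↔
      orderOf x = m ∧ orderOf y = n ∧ zpowers x ⊓ zpowers y = ⊥ := by
  refine ⟨fun h => ⟨h.1, h.2.1, h.2.2.1⟩, fun ⟨hx, hy, hdisj⟩ => ⟨hx, hy, hdisj, fun g => ?_⟩⟩
  have hcompl : IsComplement' (zpowers x) (zpowers y) :=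
    isComplement'_of_card_mul_and_disjoint
      (by rw [Nat.card_zpowers, Nat.card_zpowers, hx, hy, hG]) (disjoint_iff.mpr hdisj)
  obtain ⟨⟨⟨_, i, rfl⟩, ⟨_, j, rfl⟩⟩, rfl⟩ := hcompl.2 g
  exact ⟨i, j, rfl⟩

section MetacyclicExactPairs

variable {G : Type*} [Group G] {p d s f : ℕ} {a b : G} {r : ℤ}

theorem pow_mul_pow_pow_prime_pow (hp : p.Prime) (hpf : f + 2 ≤ p * f) (hr : r ≡ 1 [ZMOD p ^ f])
    (h : SemiconjBy b (a ^ r) a) {n l : ℕ} (hl : a ^ (p ^ (n + 1) * l) = 1) (k : ℕ) :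
    (b ^ k * a ^ l) ^ p ^ n = (b ^ p ^ n) ^ k * (a ^ p ^ n) ^ l := by
  have hrk : r ^ k ≡ 1 [ZMOD p ^ f] := by simpa using hr.pow k
  obtain ⟨u, hu, hpow⟩ := exists_mul_zpow_pow_prime_pow hp hpf hrk (semiconjBy_pow_zpow_pow h k) l n
  obtain ⟨w, hw⟩ := hu.symm.dvd
  have hexp : ((p ^ n * l : ℕ) : ℤ) * u = (p ^ n * l : ℕ) + (p ^ (n + 1) * l : ℕ) * w := by
    rw [sub_eq_iff_eq_add.mp hw]
    push_cast
    ring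
  rw [zpow_natCast] at hpow
  rw [hpow, pow_right_comm, ← Nat.cast_pow, ← Nat.cast_mul, hexp, zpow_add, zpow_natCast, zpow_mul,
    zpow_natCast, hl, one_zpow, mul_one, pow_mul]

theorem commute_pow_prime_pow (hr : r ≡ 1 [ZMOD p]) (h : SemiconjBy b (a ^ r) a) {n : ℕ}
    (ha : a ^ p ^ (n + 1) = 1) : Commute b (a ^ p ^ n) := by
  obtain ⟨w, hw⟩ := hr.symm.dvd
  have hpow : (a ^ r) ^ p ^ n = a ^ p ^ n := by
    rw [sub_eq_iff_eq_add.mp hw, zpow_add, zpow_one, (Commute.zpow_self a _).mul_pow,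
      ← zpow_natCast (a ^ _), ← zpow_mul,
      show (p * w : ℤ) * (p ^ n : ℕ) = (p ^ (n + 1) : ℕ) * w by push_cast; ring, zpow_mul,
      zpow_natCast, ha, one_zpow, one_mul]
  exact hpow ▸ h.pow_right (p ^ n)

theorem pow_dvd_of_pow_mul_pow_pow_eq_one (hp : p.Prime) (hpf : f + 2 ≤ p * f)
    (hr : r ≡ 1 [ZMOD p ^ f]) (h : SemiconjBy b (a ^ r) a) (hb : b ^ p ^ d = 1)
    (ha : orderOf a = p ^ (d + s)) {k l : ℕ} (hkl : (b ^ k * a ^ l) ^ p ^ d = 1) : p ^ s ∣ l := by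
  have hrk : r ^ k ≡ 1 [ZMOD p ^ f] := by simpa using hr.pow k
  obtain ⟨u, hu, hpow⟩ := exists_mul_zpow_pow_prime_pow hp hpf hrk (semiconjBy_pow_zpow_pow h k) l d
  rw [zpow_natCast, hkl, pow_right_comm, hb, one_pow, one_mul, eq_comm,
    ← orderOf_dvd_iff_zpow_eq_one, ha, pow_add, mul_assoc, Nat.cast_mul, Nat.cast_pow] at hpow
  have hlu := (mul_dvd_mul_iff_left (pow_ne_zero d (mod_cast hp.ne_zero))).mp hpow
  have hcop : IsCoprime (p : ℤ) u := by
    obtain ⟨w, hw⟩ := hu.symm.dvd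
    exact ⟨-w, 1, by linarith⟩
  rw [← Int.natCast_dvd_natCast]
  exact IsCoprime.dvd_of_dvd_mul_right (by simpa using hcop.pow_left (m := s)) hlu

/-- Raised to the powers `p ^ d` and `p ^ (d + s)`, the two elements land in the elementary abelian
subgroup generated by `b ^ p ^ d` and `a ^ p ^ (d + s)`, with coordinates `(k, l)` and
`(p ^ s * k', l')`. -/
theorem isExactBicyclicPair_pow_mul_pow_iff (hp : p.Prime) (hpf : f + 2 ≤ p * f)
    (hr : r ≡ 1 [ZMOD p ^ f]) (h : SemiconjBy b (a ^ r) a)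
    (hba : IsExactBicyclicPair (p ^ (d + 1)) (p ^ (d + s + 1)) b a) (k l k' l' : ℕ) :
    IsExactBicyclicPair (p ^ (d + 1)) (p ^ (d + s + 1)) (b ^ k * (a ^ p ^ s) ^ l)
      (b ^ k' * a ^ l') ↔ (k * l' - l * (p ^ s * k') : ZMod p) ≠ 0 := by
  have hG := hba.natCard_eq
  have : Finite G := Nat.finite_of_card_ne_zero (by simp [hG, hp.ne_zero])
  have hf : f ≠ 0 := by rintro rfl; omega
  obtain ⟨hb, ha, hdisj, -⟩ := hba
  have hb1 : b ^ p ^ (d + 1) = 1 := hb ▸ pow_orderOf_eq_one b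
  have ha1 : a ^ p ^ (d + s + 1) = 1 := ha ▸ pow_orderOf_eq_one a
  set B := b ^ p ^ d with hB
  set A := a ^ p ^ (d + s) with hA
  have hBp : B ^ p = 1 := by rw [hB, ← pow_mul, ← pow_succ, hb1]
  have hAp : A ^ p = 1 := by rw [hA, ← pow_mul, ← pow_succ, ha1]
  have hBA : Commute B A :=
    (commute_pow_prime_pow (hr.of_dvd (dvd_pow_self _ hf)) h ha1).pow_left _
  have hind : IsPowIndependent p B A :=
    (isPowIndependent_pow_prime_pow_iff hp hb1 ha1).mpr ⟨hb, ha, hdisj⟩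
  have hpow (i j : ℤ) : (B ^ i * A ^ j) ^ p = 1 := by
    rw [(hBA.zpow_zpow i j).mul_pow, ← zpow_natCast, ← zpow_natCast, zpow_comm, zpow_comm A,
      zpow_natCast, zpow_natCast, hBp, hAp, one_zpow, one_zpow, one_mul]
  have hx : (b ^ k * (a ^ p ^ s) ^ l) ^ p ^ d = B ^ (k : ℤ) * A ^ (l : ℤ) := by
    rw [← pow_mul, pow_mul_pow_pow_prime_pow hp hpf hr h, zpow_natCast, zpow_natCast, pow_mul,
      ← pow_mul a, ← pow_add]
    rw [← mul_assoc, ← pow_add, pow_mul, show d + 1 + s = d + s + 1 by ring, ha1, one_pow]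
  have hy : (b ^ k' * a ^ l') ^ p ^ (d + s) = B ^ (p ^ s * k' : ℤ) * A ^ (l' : ℤ) := by
    rw [pow_mul_pow_pow_prime_pow hp hpf hr h (by rw [pow_mul, ha1, one_pow]), zpow_natCast,
      ← Nat.cast_pow, ← Nat.cast_mul, zpow_natCast, pow_mul, hB,
      ← pow_mul b (p ^ d), ← pow_add]
  rw [isExactBicyclicPair_iff_of_natCard_eq hG,
    ← isPowIndependent_pow_prime_pow_iff hp (by rw [pow_succ, pow_mul, hx, hpow])
      (by rw [pow_succ, pow_mul, hy, hpow]),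
    hx, hy, isPowIndependent_zpow_mul_zpow_iff hp hBA hBp hAp hind,
    ← ZMod.intCast_zmod_eq_zero_iff_dvd]
  push_cast
  rfl

end MetacyclicExactPairs

section NormalForm

variable {G : Type*} [Group G] {m n : ℕ} {x y : G}

/-- The normal form `x ^ i * y ^ j` of an element of `⟨x⟩⟨y⟩`, with exponents read modulo the orders
`m` of `x` and `n` of `y`. -/
def normalForm (x y : G) (v : ZMod m × ZMod n) : G :=
  x ^ v.1.val * y ^ v.2.val

theorem normalForm_injective [NeZero m] [NeZero n] (hx : orderOf x = m) (hy : orderOf y = n)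
    (hxy : Disjoint (zpowers x) (zpowers y)) :
    Function.Injective (normalForm x y : ZMod m × ZMod n → G) := by
  rintro ⟨i, j⟩ ⟨i', j'⟩ hv
  have hpair := mul_injective_of_disjoint hxy
    (a₁ := (⟨x ^ i.val, npow_mem_zpowers x _⟩, ⟨y ^ j.val, npow_mem_zpowers y _⟩))
    (a₂ := (⟨x ^ i'.val, npow_mem_zpowers x _⟩, ⟨y ^ j'.val, npow_mem_zpowers y _⟩)) hv
  simp only [Prod.mk.injEq, Subtype.mk.injEq] at hpair
  refine Prod.ext (ZMod.val_injective m ?_) (ZMod.val_injective n ?_)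
  · exact pow_injOn_Iio_orderOf (hx ▸ i.val_lt) (hx ▸ i'.val_lt) hpair.1
  · exact pow_injOn_Iio_orderOf (hy ▸ j.val_lt) (hy ▸ j'.val_lt) hpair.2

theorem exists_normalForm_eq [NeZero m] [NeZero n] (hx : x ^ m = 1) (hy : y ^ n = 1) (i j : ℤ) :
    ∃ v : ZMod m × ZMod n, normalForm x y v = x ^ i * y ^ j := by
  refine ⟨(i, j), ?_⟩
  rw [normalForm, ← zpow_natCast, ← zpow_natCast, ZMod.val_intCast, ZMod.val_intCast,
    ← zpow_eq_zpow_emod i (by rwa [zpow_natCast]), ← zpow_eq_zpow_emod j (by rwa [zpow_natCast])]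

end NormalForm

section Counting

theorem natCard_preimage_mul_natCard {A B : Type*} [AddGroup A] [AddGroup B] (g : A →+ B)
    (hg : Function.Surjective g) (t : Set B) :
    Nat.card (g ⁻¹' t) * Nat.card B = Nat.card A * Nat.card t := by
  let e := QuotientAddGroup.quotientKerEquivOfSurjective g hg
  have hpre : Nat.card (g ⁻¹' t) = Nat.card g.ker * Nat.card t := by
    rw [← Nat.card_preimage_of_injective (s := t) e.injective (by simp [e.surjective.range_eq]),
      ← Nat.card_prod]
    exact Nat.card_congr (QuotientAddGroup.preimageMkEquivAddSubgroupProdSet g.ker (e ⁻¹' t))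
  rw [hpre, ← g.ker.card_mul_index, AddSubgroup.index, Nat.card_congr e.toEquiv]
  ring

theorem natCard_det_ne_zero (K : Type*) [Field K] [Fintype K] :
    Nat.card {w : (K × K) × (K × K) // w.1.1 * w.2.2 - w.1.2 * w.2.1 ≠ 0} =
      (Fintype.card K ^ 2 - 1) * (Fintype.card K ^ 2 - Fintype.card K) := by
  classical
  let toGL : {w : (K × K) × (K × K) // w.1.1 * w.2.2 - w.1.2 * w.2.1 ≠ 0} ≃ GL (Fin 2) K :=
    { toFun := fun w => Matrix.GeneralLinearGroup.mkOfDetNeZero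
        !![w.1.1.1, w.1.1.2; w.1.2.1, w.1.2.2] (by simpa [Matrix.det_fin_two_of] using w.2)
      invFun := fun M => ⟨((M 0 0, M 0 1), (M 1 0, M 1 1)), by
        simpa [Matrix.det_fin_two] using M.det_ne_zero⟩
      left_inv := fun w => rfl
      right_inv := fun M => by
        ext i j
        fin_cases i <;> fin_cases j <;> rfl }
  simpa [Fin.prod_univ_two] using (Nat.card_congr toGL).trans (Matrix.card_GL_field (𝔽 := K) 2)

theorem natCard_mul_ne_zero (K : Type*) [Field K] :
    Nat.card {w : (K × K) × (K × K) // w.1.1 * w.2.2 ≠ 0} =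
      (Nat.card K - 1) ^ 2 * Nat.card K ^ 2 := by
  let e : {w : (K × K) × (K × K) // w.1.1 * w.2.2 ≠ 0} ≃ (Kˣ × Kˣ) × (K × K) :=
    { toFun := fun w => ((Units.mk0 w.1.1.1 (left_ne_zero_of_mul w.2),
        Units.mk0 w.1.2.2 (right_ne_zero_of_mul w.2)), (w.1.1.2, w.1.2.1))
      invFun := fun v => ⟨((v.1.1, v.2.1), (v.2.2, v.1.2)), mul_ne_zero v.1.1.ne_zero v.1.2.ne_zero⟩
      left_inv := fun w => rfl
      right_inv := fun v => by ext <;> rfl }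
  rw [Nat.card_congr e, Nat.card_prod, Nat.card_prod, Nat.card_prod, Nat.card_units, sq, sq]

end Counting

section CountingExactPairs

variable {G : Type*} [Group G] {p d s f : ℕ} {a b : G} {r : ℤ}

theorem exists_normalForm_eq_of_pow_eq_one (hp : p.Prime) (hpf : f + 2 ≤ p * f)
    (hr : r ≡ 1 [ZMOD p ^ f]) (h : SemiconjBy b (a ^ r) a) (hb : b ^ p ^ d = 1)
    (ha : orderOf a = p ^ (d + s)) {i j : ℤ} (hij : (b ^ i * a ^ j) ^ p ^ d = 1) :
    ∃ v : ZMod (p ^ d) × ZMod (p ^ d), normalForm b (a ^ p ^ s) v = b ^ i * a ^ j := by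
  have := Fact.mk hp
  obtain ⟨v, hv⟩ := exists_normalForm_eq hb (ha ▸ pow_orderOf_eq_one a) i j
  rw [← hv] at hij ⊢
  obtain ⟨t, ht⟩ := pow_dvd_of_pow_mul_pow_pow_eq_one hp hpf hr h hb ha hij
  have has : (a ^ p ^ s) ^ p ^ d = 1 := by
    rw [← pow_mul, ← pow_add, add_comm, ← ha, pow_orderOf_eq_one]
  simpa only [normalForm, ht, pow_mul, zpow_natCast] using exists_normalForm_eq hb has v.1.val t

theorem natCard_isExactBicyclicPair_eq_natCard_exponents (hp : p.Prime) (hpf : f + 2 ≤ p * f)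
    (hr : r ≡ 1 [ZMOD p ^ f]) (h : SemiconjBy b (a ^ r) a)
    (hba : IsExactBicyclicPair (p ^ (d + 1)) (p ^ (d + s + 1)) b a) :
    Nat.card {z : G × G // IsExactBicyclicPair (p ^ (d + 1)) (p ^ (d + s + 1)) z.1 z.2} =
      Nat.card {v : (ZMod (p ^ (d + 1)) × ZMod (p ^ (d + 1))) ×
          (ZMod (p ^ (d + 1)) × ZMod (p ^ (d + s + 1))) //
        (v.1.1.val * v.2.2.val - v.1.2.val * (p ^ s * v.2.1.val) : ZMod p) ≠ 0} := by
  have := Fact.mk hp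
  obtain ⟨hb, ha, hdisj, hgen⟩ := id hba
  have hb1 : b ^ p ^ (d + 1) = 1 := hb ▸ pow_orderOf_eq_one b
  have ha1 : a ^ p ^ (d + s + 1) = 1 := ha ▸ pow_orderOf_eq_one a
  have ha' : orderOf a = p ^ (d + 1 + s) := by rw [ha, add_right_comm]
  have has : orderOf (a ^ p ^ s) = p ^ (d + 1) :=
    orderOf_pow_prime_pow hp (by rw [ha', add_comm])
  have hdisj' : Disjoint (zpowers b) (zpowers (a ^ p ^ s)) :=
    (disjoint_iff.mpr hdisj).mono_right (zpowers_le.mpr (npow_mem_zpowers a _))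
  let Φ : (ZMod (p ^ (d + 1)) × ZMod (p ^ (d + 1))) ×
      (ZMod (p ^ (d + 1)) × ZMod (p ^ (d + s + 1))) → G × G :=
    Prod.map (normalForm b (a ^ p ^ s)) (normalForm b a)
  have hΦ : Function.Injective Φ :=
    (normalForm_injective hb has hdisj').prodMap
      (normalForm_injective hb ha (disjoint_iff.mpr hdisj))
  have hrange : {z : G × G | IsExactBicyclicPair (p ^ (d + 1)) (p ^ (d + s + 1)) z.1 z.2} ⊆
      Set.range Φ := by
    rintro ⟨x, y⟩ ⟨hx : orderOf x = _, -⟩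
    obtain ⟨i, j, rfl⟩ := hgen x
    obtain ⟨i', j', rfl⟩ := hgen y
    rw [Set.range_prodMap]
    exact ⟨exists_normalForm_eq_of_pow_eq_one hp hpf hr h hb1 ha' (hx ▸ pow_orderOf_eq_one _),
      exists_normalForm_eq hb1 ha1 i' j'⟩
  refine (Nat.card_preimage_of_injective hΦ hrange).symm.trans ?_
  exact Nat.card_congr (Equiv.subtypeEquivRight fun v =>
    isExactBicyclicPair_pow_mul_pow_iff hp hpf hr h hba _ _ _ _)

theorem natCard_isExactBicyclicPair_mul (hp : p.Prime) (hpf : f + 2 ≤ p * f)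
    (hr : r ≡ 1 [ZMOD p ^ f]) (h : SemiconjBy b (a ^ r) a)
    (hba : IsExactBicyclicPair (p ^ (d + 1)) (p ^ (d + s + 1)) b a) :
    Nat.card {z : G × G // IsExactBicyclicPair (p ^ (d + 1)) (p ^ (d + s + 1)) z.1 z.2} * p ^ 4 =
      p ^ (4 * d + s + 4) * Nat.card {w : (ZMod p × ZMod p) × (ZMod p × ZMod p) //
        w.1.1 * w.2.2 - w.1.2 * (p ^ s * w.2.1) ≠ 0} := by
  have := Fact.mk hp
  let red (n : ℕ) : ZMod (p ^ (n + 1)) →+ ZMod p :=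
    (ZMod.castHom (dvd_pow_self p n.succ_ne_zero) (ZMod p)).toAddMonoidHom
  have hred (n : ℕ) : Function.Surjective (red n) :=
    ZMod.castHom_surjective (dvd_pow_self p n.succ_ne_zero)
  let g := ((red d).prodMap (red d)).prodMap ((red d).prodMap (red (d + s)))
  have hg : Function.Surjective g :=
    ((hred d).prodMap (hred d)).prodMap ((hred d).prodMap (hred (d + s)))
  have hcount := natCard_preimage_mul_natCard g hg
    {w | w.1.1 * w.2.2 - w.1.2 * (p ^ s * w.2.1) ≠ 0}
  simp only [Nat.card_prod, Nat.card_zmod] at hcount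
  rw [natCard_isExactBicyclicPair_eq_natCard_exponents hp hpf hr h hba]
  convert hcount using 2
  · refine Nat.card_congr (Equiv.subtypeEquivRight fun v => ?_)
    simp [g, red]
  · ring
  · ring
  · rfl

theorem natCard_isExactBicyclicPair_of_eq (hp : p.Prime) (hpf : f + 2 ≤ p * f)
    (hr : r ≡ 1 [ZMOD p ^ f]) (h : SemiconjBy b (a ^ r) a) (hd : 1 ≤ d)
    (hba : IsExactBicyclicPair (p ^ d) (p ^ d) b a) :
    Nat.card {z : G × G // IsExactBicyclicPair (p ^ d) (p ^ d) z.1 z.2} =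
      p ^ (4 * d - 3) * (p ^ 2 - 1) * (p - 1) := by
  have := Fact.mk hp
  obtain ⟨d, rfl⟩ := Nat.exists_eq_add_of_le' hd
  have hcount := natCard_isExactBicyclicPair_mul (s := 0) hp hpf hr h hba
  simp only [pow_zero, one_mul, add_zero, natCard_det_ne_zero, ZMod.card] at hcount
  refine Nat.eq_of_mul_eq_mul_right (pow_pos hp.pos 4) (hcount.trans ?_)
  rw [show 4 * (d + 1) - 3 = 4 * d + 1 by omega,
    show p ^ 2 - p = p * (p - 1) by rw [Nat.mul_sub, mul_one, sq]]
  ring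

theorem natCard_isExactBicyclicPair_of_lt {e : ℕ} (hp : p.Prime) (hpf : f + 2 ≤ p * f)
    (hr : r ≡ 1 [ZMOD p ^ f]) (h : SemiconjBy b (a ^ r) a) (hd : 1 ≤ d) (hde : d < e)
    (hba : IsExactBicyclicPair (p ^ d) (p ^ e) b a) :
    Nat.card {z : G × G // IsExactBicyclicPair (p ^ d) (p ^ e) z.1 z.2} =
      p ^ (3 * d + e - 2) * (p - 1) ^ 2 := by
  have := Fact.mk hp
  obtain ⟨d, rfl⟩ := Nat.exists_eq_add_of_le' hd
  obtain ⟨s, rfl⟩ := Nat.exists_eq_add_of_lt hde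
  rw [show d + 1 + s + 1 = d + (s + 1) + 1 by ring] at hba ⊢
  have hcount := natCard_isExactBicyclicPair_mul hp hpf hr h hba
  simp only [CharP.cast_eq_zero, pow_succ, mul_zero, zero_mul, sub_zero, natCard_mul_ne_zero,
    Nat.card_zmod] at hcount
  refine Nat.eq_of_mul_eq_mul_right (pow_pos hp.pos 4) (hcount.trans ?_)
  rw [show 3 * (d + 1) + (d + (s + 1) + 1) - 2 = 4 * d + s + 3 by omega]
  ring

end CountingExactPairs

theorem exists_zpow_mul_zpow_eq_of_closure_eq_top {G : Type*} [Group G] {a b : G} {r : ℤ}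
    (hgen : closure {a, b} = ⊤) (ha : IsOfFinOrder a) (h : SemiconjBy b (a ^ r) a) (g : G) :
    ∃ i j : ℤ, g = b ^ i * a ^ j := by
  have : Finite (zpowers a : Set G) := finite_zpowers.mpr ha
  have ha_mem : a ∈ normalizer (zpowers a : Set G) := le_normalizer (mem_zpowers a)
  have hb_mem : b⁻¹ ∈ normalizer (zpowers a : Set G) := by
    refine mem_normalizer_fintype ?_
    rintro _ ⟨k, rfl⟩
    have hk := (h.zpow_right k).eq
    exact ⟨r * k, by simp only [zpow_mul]; rw [inv_inv, mul_assoc, ← hk, inv_mul_cancel_left]⟩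
  have hnormal : (zpowers a).Normal := by
    rw [← normalizer_eq_top_iff, eq_top_iff, ← hgen, closure_le]
    rintro x (rfl | rfl)
    exacts [ha_mem, inv_mem_iff.mp hb_mem]
  have hg : g ∈ zpowers b ⊔ zpowers a := by
    rw [zpowers_eq_closure, zpowers_eq_closure, ← Subgroup.closure_union, Set.singleton_union,
      Set.pair_comm, hgen]
    exact mem_top g
  rw [← SetLike.mem_coe, mul_normal] at hg
  obtain ⟨_, ⟨i, rfl⟩, _, ⟨j, rfl⟩, rfl⟩ := hg
  exact ⟨i, j, rfl⟩

section M1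

variable {p d e f : ℕ}

theorem M1a_pow_eq_one : M1a p d e f ^ p ^ e = 1 :=
  PresentedGroup.one_of_mem (show FreeGroup.of 0 ^ p ^ e ∈ M1rels p d e f by simp [M1rels])

theorem M1b_pow_eq_one : M1b p d e f ^ p ^ d = 1 :=
  PresentedGroup.one_of_mem (show FreeGroup.of 1 ^ p ^ d ∈ M1rels p d e f by simp [M1rels])

theorem semiconjBy_M1b_M1a :
    SemiconjBy (M1b p d e f) (M1a p d e f ^ (1 + p ^ f : ℤ)) (M1a p d e f) := by
  have hrel : (M1b p d e f)⁻¹ * M1a p d e f * M1b p d e f * (M1a p d e f ^ (1 + p ^ f))⁻¹ = 1 :=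
    PresentedGroup.one_of_mem (show (FreeGroup.of 1)⁻¹ * FreeGroup.of 0 * FreeGroup.of 1 *
      (FreeGroup.of 0 ^ (1 + p ^ f))⁻¹ ∈ M1rels p d e f by simp [M1rels])
  rw [mul_inv_eq_one, mul_assoc, inv_mul_eq_iff_eq_mul] at hrel
  exact_mod_cast hrel.symm

theorem closure_M1a_M1b : closure {M1a p d e f, M1b p d e f} = ⊤ := by
  rw [← PresentedGroup.closure_range_of (M1rels p d e f)]
  congr 1
  ext x
  simp [Fin.exists_fin_two, M1a, M1b, eq_comm]

theorem exists_M1_hom {H : Type*} [Group H] {x y : H} (hx : x ^ p ^ e = 1) (hy : y ^ p ^ d = 1)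
    (hxy : y⁻¹ * x * y = x ^ (1 + p ^ f)) :
    ∃ φ : M1 p d e f →* H, φ (M1a p d e f) = x ∧ φ (M1b p d e f) = y := by
  have hrels : ∀ w ∈ M1rels p d e f, FreeGroup.lift ![x, y] w = 1 := by
    rintro w (rfl | rfl | rfl)
    · simpa using hx
    · simpa using hy
    · simpa [mul_inv_eq_one] using hxy
  exact ⟨PresentedGroup.toGroup hrels, PresentedGroup.toGroup.of hrels,
    PresentedGroup.toGroup.of hrels⟩

theorem orderOf_M1a [NeZero p] (h : (1 + (p : ZMod (p ^ e)) ^ f) ^ p ^ d = 1) :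
    orderOf (M1a p d e f) = p ^ e := by
  -- Let `M1` act on `ZMod (p ^ e)` by affine maps, where translation by `1` has order `p ^ e`.
  let u := Units.ofPowEqOne (1 + (p : ZMod (p ^ e)) ^ f) (p ^ d) h (NeZero.ne _)
  have hu : u ^ p ^ d = 1 := Units.pow_ofPowEqOne h _
  have huval : (u : ZMod (p ^ e)) = 1 + p ^ f := rfl
  obtain ⟨φ, hφa, -⟩ : ∃ φ : M1 p d e f →* Equiv.Perm (ZMod (p ^ e)),
      φ (M1a p d e f) = Equiv.addRight 1 ∧ φ (M1b p d e f) = MulAction.toPermHom _ _ u⁻¹ := by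
    refine exists_M1_hom ?_ ?_ ?_
    · rw [Equiv.nsmul_addRight, nsmul_one, ZMod.natCast_self, Equiv.addRight_zero]
    · rw [← map_pow, inv_pow, hu, inv_one, map_one]
    · rw [← map_inv, inv_inv, Equiv.nsmul_addRight]
      ext z
      simp only [Equiv.Perm.mul_apply, MulAction.toPermHom_apply, MulAction.toPerm_apply,
        Equiv.coe_addRight, smul_add, smul_inv_smul, nsmul_one]
      rw [Units.smul_def, huval, smul_eq_mul, mul_one, Nat.cast_add, Nat.cast_one, Nat.cast_pow]
  refine Nat.dvd_antisymm (orderOf_dvd_of_pow_eq_one M1a_pow_eq_one) ?_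
  have hpow : φ (M1a p d e f) ^ orderOf (M1a p d e f) = 1 := by
    rw [← map_pow, pow_orderOf_eq_one, map_one]
  rw [hφa, Equiv.nsmul_addRight] at hpow
  simpa [ZMod.natCast_eq_zero_iff] using Equiv.congr_fun hpow 0

theorem pow_dvd_of_M1b_zpow_mem_zpowers_M1a {i : ℤ}
    (hi : M1b p d e f ^ i ∈ zpowers (M1a p d e f)) : (p ^ d : ℤ) ∣ i := by
  obtain ⟨φ, hφa, hφb⟩ : ∃ φ : M1 p d e f →* Multiplicative (ZMod (p ^ d)),
      φ (M1a p d e f) = 1 ∧ φ (M1b p d e f) = .ofAdd 1 :=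
    exists_M1_hom (one_pow _) (by simp [← ofAdd_nsmul]) (by simp)
  obtain ⟨j, hj⟩ := mem_zpowers_iff.mp hi
  have hφ := congrArg φ hj
  rw [map_zpow, map_zpow, hφa, hφb, one_zpow, ← ofAdd_zsmul, zsmul_one, eq_comm,
    ofAdd_eq_one, ZMod.intCast_zmod_eq_zero_iff_dvd] at hφ
  exact_mod_cast hφ

theorem isExactBicyclicPair_M1b_M1a [NeZero p]
    (h : (1 + (p : ZMod (p ^ e)) ^ f) ^ p ^ d = 1) :
    IsExactBicyclicPair (p ^ d) (p ^ e) (M1b p d e f) (M1a p d e f) := by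
  have ha : IsOfFinOrder (M1a p d e f) :=
    isOfFinOrder_iff_pow_eq_one.mpr ⟨p ^ e, NeZero.pos _, M1a_pow_eq_one⟩
  refine ⟨Nat.dvd_antisymm (orderOf_dvd_of_pow_eq_one M1b_pow_eq_one) ?_, orderOf_M1a h,
    (eq_bot_iff_forall _).mpr ?_,
    exists_zpow_mul_zpow_eq_of_closure_eq_top closure_M1a_M1b ha semiconjBy_M1b_M1a⟩
  · have hdvd := pow_dvd_of_M1b_zpow_mem_zpowers_M1a (p := p) (d := d) (e := e) (f := f)
      (i := orderOf (M1b p d e f)) (by simp [pow_orderOf_eq_one])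
    exact_mod_cast hdvd
  · rintro _ ⟨⟨i, rfl⟩, hi⟩
    obtain ⟨k, rfl⟩ := pow_dvd_of_M1b_zpow_mem_zpowers_M1a hi
    simp only [zpow_mul]
    rw [← Nat.cast_pow, zpow_natCast, M1b_pow_eq_one, one_zpow]

theorem one_add_prime_pow_pow_prime_pow_eq_one (hp : p.Prime) (hpf : f + 2 ≤ p * f)
    (hef : e ≤ d + f) : (1 + (p : ZMod (p ^ e)) ^ f) ^ p ^ d = 1 := by
  obtain ⟨y, hy⟩ := ZMod.exists_one_add_mul_pow_prime_pow_eq (u := (p : ZMod (p ^ e)) ^ f)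
    (v := p) hp (dvd_pow_self _ (by rintro rfl; omega))
    (by rw [← pow_succ', ← pow_succ, ← pow_mul, mul_comm f]; exact pow_dvd_pow _ hpf) 1 d
  have hzero : (p : ZMod (p ^ e)) ^ (d + f) = 0 := by
    rw [← Nat.cast_pow, ZMod.natCast_eq_zero_iff]
    exact pow_dvd_pow p hef
  rwa [mul_one, ← pow_add, hzero, zero_mul, add_zero] at hy

end M1

theorem stmt_8_general (p d e f : ℕ) (hp : p.Prime) (hpf : f + 2 ≤ p * f) (hd : 1 ≤ d)
    (hef : e ≤ d + f) :
    (d = e →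
      Nat.card {x : M1 p d e f × M1 p d e f // IsExactBicyclicPair (p ^ d) (p ^ e) x.1 x.2} =
        p ^ (4 * e - 3) * (p ^ 2 - 1) * (p - 1)) ∧
    (d < e →
      Nat.card {x : M1 p d e f × M1 p d e f // IsExactBicyclicPair (p ^ d) (p ^ e) x.1 x.2} =
        p ^ (3 * d + e - 2) * (p - 1) ^ 2) := by
  have : NeZero p := ⟨hp.ne_zero⟩
  have hr : (1 + p ^ f : ℤ) ≡ 1 [ZMOD p ^ f] := Int.add_modEq_right
  have hba : IsExactBicyclicPair (p ^ d) (p ^ e) (M1b p d e f) (M1a p d e f) :=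
    isExactBicyclicPair_M1b_M1a (one_add_prime_pow_pow_prime_pow_eq_one hp hpf hef)
  constructor
  · rintro rfl
    exact natCard_isExactBicyclicPair_of_eq hp hpf hr semiconjBy_M1b_M1a hd hba
  · intro hde
    exact natCard_isExactBicyclicPair_of_lt hp hpf hr semiconjBy_M1b_M1a hd hde hba

/-- The number of exact `(p^d,p^e)`-bicyclic pairs of `M₁(p,d,e,f)` is
`p^(4e-3)(p²-1)(p-1)` if `d = e`, and `p^(3d+e-2)(p-1)²` if `d < e`. -/
theorem stmt_8 (p d e f : ℕ) (hp : p.Prime) (hodd : Odd p)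
    (hcond : (1 ≤ d ∧ d ≤ f ∧ f ≤ e ∧ e ≤ d + f) ∨ (1 ≤ f ∧ f < d ∧ d < e ∧ e ≤ d + f)) :
    (d = e →
      Nat.card {x : M1 p d e f × M1 p d e f // IsExactBicyclicPair (p ^ d) (p ^ e) x.1 x.2} =
        p ^ (4 * e - 3) * (p ^ 2 - 1) * (p - 1)) ∧
    (d < e →
      Nat.card {x : M1 p d e f × M1 p d e f // IsExactBicyclicPair (p ^ d) (p ^ e) x.1 x.2} =
        p ^ (3 * d + e - 2) * (p - 1) ^ 2) := by
  have hp3 : 3 ≤ p := hp.odd_iff.mp hodd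
  exact stmt_8_general p d e f hp (by nlinarith [show 1 ≤ f by omega]) (by omega) (by omega)
end

section
/- Let p be an odd prime and let d, e, f be positive integers with 1 ≤ f < d < e. Then the number of exact (p^d, p^e)-bicyclic pairs of the group M₂(p,d,e,f) equals p^{3d+e−2}(p−1)². -/
/-!
Write an element of `M₂(p,d,e,f)` as `y * x` with `y ∈ ⟨b⟩` and `x ∈ ⟨a⟩`. If `y` acts on `⟨a⟩` by
`x ↦ x ^ v`, then `(y * x) ^ n = y ^ n * x ^ (1 + v + ⋯ + v ^ (n - 1))`, so orders are governed by
the `p`-adic valuation of geometric sums. This valuation is at least that of `n` when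
`v ≡ 1 [MOD p]`, and equal to it when `v ≡ 1 [MOD p ^ 2]`.

Every `β` of order `p ^ e` is `y * x` with `y` a generator of `⟨b⟩`, and can replace `b` in the
splitting; hence each of these `φ(p ^ e) * p ^ d` elements `β` lies in as many pairs as `b`. For
`β = b` and `α = y * x`, the pair is exact if and only if `y ^ p ^ d = 1` and `x` generates `⟨a⟩`:
as `d < e`, such a `y` is a `p`-th power in `⟨b⟩` and so acts with `v ≡ 1 [MOD p ^ 2]`. This leaves
`p ^ d * φ(p ^ d)` choices of `α`.
-/

section GeomSum

open Finset

theorem geom_sum_mul_eq_mul_geom_sum {R : Type*} [Semiring R] (x : R) (m n : ℕ) :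
    ∑ i ∈ range (m * n), x ^ i = (∑ i ∈ range m, x ^ i) * ∑ i ∈ range n, (x ^ m) ^ i := by
  induction n with
  | zero => simp
  | succ n ih =>
    rw [Nat.mul_succ, sum_range_add, ih, sum_range_succ _ n, mul_add, ← pow_mul]
    simp only [sum_mul, ← pow_add, add_comm]

theorem geom_sum_modEq_card {q x : ℕ} (hx : x ≡ 1 [MOD q]) (n : ℕ) :
    ∑ i ∈ range n, x ^ i ≡ n [MOD q] := by
  simpa using Nat.ModEq.sum (s := range n) fun i _ => hx.pow i

/-- The case `r = 0` bounds the `p`-adic valuation of the geometric sum from below by that of `n`;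
the case `r = 1` shows that the two agree, for `p = 2` as well. -/
theorem geom_sum_modEq_of_pow_dvd {p r x m n : ℕ} (hx : x ≡ 1 [MOD p ^ (r + 1)])
    (hn : p ^ m ∣ n) : ∑ i ∈ range n, x ^ i ≡ n [MOD p ^ (m + r)] := by
  induction m generalizing n with
  | zero => exact (geom_sum_modEq_card hx n).of_dvd (pow_dvd_pow p (by lia))
  | succ m ih =>
    obtain ⟨k, rfl⟩ := hn
    rw [pow_succ, mul_right_comm]
    set N := p ^ m * k
    have hN : ∑ i ∈ range N, x ^ i ≡ N [MOD p ^ (m + r)] := ih (dvd_mul_right _ k)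
    have hdvd : p ^ m ∣ ∑ i ∈ range N, x ^ i :=
      (hN.dvd_iff (pow_dvd_pow p (Nat.le_add_right m r))).2 (dvd_mul_right _ k)
    have hp : ∑ i ∈ range p, (x ^ N) ^ i ≡ p [MOD p ^ (r + 1)] :=
      geom_sum_modEq_card (by simpa using hx.pow N) p
    calc ∑ i ∈ range (N * p), x ^ i
        = (∑ i ∈ range N, x ^ i) * ∑ i ∈ range p, (x ^ N) ^ i := geom_sum_mul_eq_mul_geom_sum x N p
      _ ≡ (∑ i ∈ range N, x ^ i) * p [MOD p ^ (m + 1 + r)] :=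
          (hp.mul_left' _).of_dvd <| by
            rw [show m + 1 + r = m + (r + 1) by lia, pow_add]
            exact mul_dvd_mul_right hdvd _
      _ ≡ N * p [MOD p ^ (m + 1 + r)] := by
          rw [add_right_comm, pow_succ]
          exact hN.mul_right' p

theorem pow_dvd_geom_sum {p x m n : ℕ} (hx : x ≡ 1 [MOD p]) (hn : p ^ m ∣ n) :
    p ^ m ∣ ∑ i ∈ range n, x ^ i :=
  ((geom_sum_modEq_of_pow_dvd (r := 0) (by simpa using hx) hn).dvd_iff dvd_rfl).2 hn

theorem pow_dvd_of_pow_dvd_geom_sum {p x m n : ℕ} (hx : x ≡ 1 [MOD p ^ 2])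
    (h : p ^ m ∣ ∑ i ∈ range n, x ^ i) : p ^ m ∣ n := by
  induction m with
  | zero => exact one_dvd n
  | succ m ih =>
    have hn : p ^ m ∣ n := ih ((pow_dvd_pow p m.le_succ).trans h)
    exact ((geom_sum_modEq_of_pow_dvd hx hn).dvd_iff dvd_rfl).1 h

end GeomSum

theorem pow_pow_modEq_one_of_modEq_one {p x : ℕ} (hx : x ≡ 1 [MOD p]) (n : ℕ) :
    x ^ p ^ n ≡ 1 [MOD p ^ (n + 1)] := by
  rw [← Int.natCast_modEq_iff, Int.modEq_comm, Int.modEq_iff_dvd] at hx ⊢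
  push_cast at hx ⊢
  simpa only [one_pow] using dvd_sub_pow_of_dvd_sub hx n

theorem natCard_subtype_prod_eq_mul {α β : Type*} [Finite α] [Finite β] {r : α → β → Prop}
    {P : β → Prop} {n : ℕ} (hP : ∀ x y, r x y → P y)
    (hn : ∀ y, P y → Nat.card {x // r x y} = n) :
    Nat.card {z : α × β // r z.1 z.2} = Nat.card {y // P y} * n := by
  have := Fintype.ofFinite {y // P y}
  have e : {z : α × β // r z.1 z.2} ≃ Σ y : {y // P y}, {x // r x y} :=
    { toFun z := ⟨⟨z.1.2, hP _ _ z.2⟩, z.1.1, z.2⟩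
      invFun w := ⟨(w.2.1, w.1.1), w.2.2⟩ }
  rw [Nat.card_congr e, Nat.card_sigma, Finset.sum_congr rfl fun (y : {y // P y}) _ => hn y.1 y.2]
  simp [Nat.card_eq_fintype_card]

section Group

variable {G : Type*} [Group G] {a b : G} {u : ℕ}

theorem semiconjBy_pow_pow (h : SemiconjBy b (a ^ u) a) (n : ℕ) :
    SemiconjBy (b ^ n) (a ^ u ^ n) a := by
  induction n with
  | zero => simp
  | succ n ih =>
    rw [pow_succ b, pow_succ' u, pow_mul]
    exact ih.mul_left (h.pow_right (u ^ n))

theorem mul_pow_of_semiconjBy (h : SemiconjBy b (a ^ u) a) (n : ℕ) :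
    (b * a) ^ n = b ^ n * a ^ ∑ i ∈ Finset.range n, u ^ i := by
  induction n with
  | zero => simp
  | succ n ih =>
    have hab : a ^ (∑ i ∈ Finset.range n, u ^ i) * b =
        b * a ^ (u * ∑ i ∈ Finset.range n, u ^ i) := by
      rw [pow_mul, (h.pow_right _).eq]
    rw [pow_succ, ih, geom_sum_succ, pow_succ, pow_succ, mul_assoc, ← mul_assoc _ b, hab]
    simp only [mul_assoc]

theorem normal_zpowers_of_semiconjBy (ha : IsOfFinOrder a) (h : SemiconjBy b (a ^ u) a)
    (hgen : Subgroup.closure {a, b} = ⊤) : (Subgroup.zpowers a).Normal := by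
  have : Finite (Subgroup.zpowers a) := ha.finite_zpowers
  have hb : b⁻¹ ∈ Subgroup.normalizer (Subgroup.zpowers a : Set G) := by
    refine Subgroup.mem_normalizer_fintype ?_
    rintro _ ⟨i, rfl⟩
    refine ⟨u * i, ?_⟩
    dsimp only
    rw [inv_inv, mul_assoc, eq_inv_mul_iff_mul_eq, zpow_mul, zpow_natCast, (h.zpow_right i).eq]
  rw [← Subgroup.normalizer_eq_top_iff, ← top_le_iff, ← hgen, Subgroup.closure_le]
  exact Set.pair_subset (Subgroup.le_normalizer (Subgroup.mem_zpowers a)) (inv_mem_iff.1 hb)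

theorem natCard_subtype_of_isComplement' {H K : Subgroup G} (h : H.IsComplement' K)
    {P : G → Prop} {A : H → Prop} {B : K → Prop}
    (hP : ∀ (y : H) (x : K), P (y * x) ↔ A y ∧ B x) :
    Nat.card {g // P g} = Nat.card {y // A y} * Nat.card {x // B x} := by
  rw [← Nat.card_prod]
  exact Nat.card_congr <| ((Equiv.ofBijective _ h).subtypeEquiv fun c =>
    (hP c.1 c.2).symm).symm.trans Equiv.subtypeProdEquivProd

theorem natCard_orderOf_eq_of_isCyclic [IsCyclic G] [Finite G] {n : ℕ} (hn : n ∣ Nat.card G) :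
    Nat.card {g : G // orderOf g = n} = n.totient := by
  classical
  have := Fintype.ofFinite G
  rw [Nat.card_eq_fintype_card, Fintype.card_subtype]
  exact IsCyclic.card_orderOf_eq_totient (Nat.card_eq_fintype_card (α := G) ▸ hn)

theorem natCard_pow_eq_one_of_isCyclic [IsCyclic G] [Finite G] (n : ℕ) :
    Nat.card {g : G // g ^ n = 1} = (Nat.card G).gcd n := by
  let := IsCyclic.commGroup (α := G)
  exact IsCyclic.card_powMonoidHom_ker G n

theorem isExactBicyclicPair_iff_disjoint [Finite G] {m n : ℕ} (hG : Nat.card G = m * n) {α β : G} :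
    IsExactBicyclicPair m n α β ↔ orderOf α = m ∧ orderOf β = n ∧
      Disjoint (Subgroup.zpowers α) (Subgroup.zpowers β) := by
  rw [IsExactBicyclicPair, ← disjoint_iff]
  refine ⟨fun h => ⟨h.1, h.2.1, h.2.2.1⟩, fun ⟨hα, hβ, hdisj⟩ => ⟨hα, hβ, hdisj, fun g => ?_⟩⟩
  have hcompl := Subgroup.isComplement'_of_card_mul_and_disjoint
    (by rw [Nat.card_zpowers, Nat.card_zpowers, hα, hβ, hG]) hdisj
  obtain ⟨⟨⟨_, i, rfl⟩, ⟨_, j, rfl⟩⟩, hg⟩ := hcompl.surjective g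
  exact ⟨i, j, hg.symm⟩

end Group

/-- `G` is the semidirect product of the cyclic group `⟨a⟩` of order `p ^ d` by the cyclic group
`⟨b⟩` of order `p ^ e`, where `b⁻¹ * a * b = a ^ u` and `u ≡ 1 [MOD p]`. The group `M₂(p,d,e,f)` is
the case `u = 1 + p ^ f`; a general `u` makes the notion stable under changing the generator `b`. -/
structure IsSplitMetacyclic {G : Type*} [Group G] (p d e u : ℕ) (a b : G) : Prop where
  orderOf_left : orderOf a = p ^ d
  orderOf_right : orderOf b = p ^ e
  isComplement' : (Subgroup.zpowers b).IsComplement' (Subgroup.zpowers a)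
  semiconjBy : SemiconjBy b (a ^ u) a
  modEq_one : u ≡ 1 [MOD p]

namespace IsSplitMetacyclic

open Subgroup

variable {G : Type*} [Group G] {p d e u : ℕ} {a b x y : G}

theorem natCard_eq (h : IsSplitMetacyclic p d e u a b) : Nat.card G = p ^ d * p ^ e := by
  rw [← h.isComplement'.card_mul_card, Nat.card_zpowers, Nat.card_zpowers, h.orderOf_left,
    h.orderOf_right, mul_comm]

theorem orderOf_dvd_pow (h : IsSplitMetacyclic p d e u a b) (hx : x ∈ zpowers a) {m : ℕ}
    (hm : d ≤ m) : orderOf x ∣ p ^ m :=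
  (orderOf_dvd_of_mem_zpowers hx).trans (h.orderOf_left ▸ pow_dvd_pow p hm)

section NeZero

variable [NeZero p]

theorem finite (h : IsSplitMetacyclic p d e u a b) : Finite G :=
  Nat.finite_of_card_ne_zero (by simp [h.natCard_eq, NeZero.ne p])

theorem exists_semiconjBy (h : IsSplitMetacyclic p d e u a b) (hy : y ∈ zpowers b) :
    ∃ v, v ≡ 1 [MOD p] ∧ ∀ x ∈ zpowers a, SemiconjBy y (x ^ v) x := by
  have := h.finite
  obtain ⟨j, rfl⟩ := mem_powers_iff_mem_zpowers.2 hy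
  refine ⟨u ^ j, by simpa using h.modEq_one.pow j, ?_⟩
  intro x hx
  obtain ⟨i, rfl⟩ := mem_zpowers_iff.1 hx
  have hcomm : (a ^ i) ^ u ^ j = (a ^ u ^ j) ^ i := by
    rw [← zpow_natCast, ← zpow_natCast, zpow_comm]
  rw [hcomm]
  exact (semiconjBy_pow_pow h.semiconjBy j).zpow_right i

theorem mul_pow_prime_pow (h : IsSplitMetacyclic p d e u a b) (hy : y ∈ zpowers b)
    (hx : x ∈ zpowers a) {m : ℕ} (hm : orderOf x ∣ p ^ m) : (y * x) ^ p ^ m = y ^ p ^ m := by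
  obtain ⟨v, hv, hyx⟩ := h.exists_semiconjBy hy
  rw [mul_pow_of_semiconjBy (hyx x hx),
    orderOf_dvd_iff_pow_eq_one.1 (hm.trans (pow_dvd_geom_sum hv dvd_rfl)), mul_one]

theorem pow_eq_one_of_mul_pow_mem (h : IsSplitMetacyclic p d e u a b) (hy : y ∈ zpowers b)
    (hx : x ∈ zpowers a) {n : ℕ} (hn : (y * x) ^ n ∈ zpowers a) : y ^ n = 1 := by
  obtain ⟨v, -, hyx⟩ := h.exists_semiconjBy hy
  rw [mul_pow_of_semiconjBy (hyx x hx), mul_mem_cancel_right (pow_mem hx _)] at hn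
  exact disjoint_def.1 h.isComplement'.disjoint (pow_mem hy n) hn

theorem orderOf_mul_eq (h : IsSplitMetacyclic p d e u a b) (hde : d ≤ e)
    (hy : y ∈ zpowers b) (hx : x ∈ zpowers a) (hord : orderOf y = p ^ e) :
    orderOf (y * x) = p ^ e := by
  refine Nat.dvd_antisymm (orderOf_dvd_of_pow_eq_one ?_) ?_
  · rw [h.mul_pow_prime_pow hy hx (h.orderOf_dvd_pow hx hde), ← hord, pow_orderOf_eq_one]
  · rw [← hord, orderOf_dvd_iff_pow_eq_one]
    exact h.pow_eq_one_of_mul_pow_mem hy hx (by simp [pow_orderOf_eq_one])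

theorem exists_mul_right (h : IsSplitMetacyclic p d e u a b) (hde : d ≤ e)
    (hy : y ∈ zpowers b) (hx : x ∈ zpowers a) (hord : orderOf y = p ^ e) :
    ∃ v, IsSplitMetacyclic p d e v a (y * x) := by
  have := h.finite
  obtain ⟨v, hv, hyx⟩ := h.exists_semiconjBy hy
  have hord' := h.orderOf_mul_eq hde hy hx hord
  have hcomm : SemiconjBy x (a ^ v) (a ^ v) := by
    obtain ⟨i, rfl⟩ := hx
    exact (Commute.refl a).zpow_left i |>.pow_right v
  refine ⟨v, h.orderOf_left, hord', isComplement'_of_card_mul_and_disjoint ?_ ?_,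
    (hyx a (mem_zpowers a)).mul_left hcomm, hv⟩
  · rw [Nat.card_zpowers, Nat.card_zpowers, hord', h.orderOf_left, h.natCard_eq, mul_comm]
  · refine disjoint_def.2 fun hg hga => ?_
    obtain ⟨n, rfl⟩ := mem_powers_iff_mem_zpowers.2 hg
    exact orderOf_dvd_iff_pow_eq_one.1 <| hord' ▸ hord ▸
      orderOf_dvd_of_pow_eq_one (h.pow_eq_one_of_mul_pow_mem hy hx hga)

theorem exists_semiconjBy_of_pow_eq_one (h : IsSplitMetacyclic p d e u a b) (hde : d < e)
    (hy : y ∈ zpowers b) (hyd : y ^ p ^ d = 1) :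
    ∃ v, v ≡ 1 [MOD p ^ 2] ∧ ∀ x ∈ zpowers a, SemiconjBy y (x ^ v) x := by
  have := h.finite
  obtain ⟨j, rfl⟩ := mem_powers_iff_mem_zpowers.2 hy
  obtain ⟨i, rfl⟩ : p ∣ j := by
    have hj : p ^ e ∣ j * p ^ d := by
      rwa [← h.orderOf_right, orderOf_dvd_iff_pow_eq_one, pow_mul]
    rw [← Nat.mul_dvd_mul_iff_right (pow_pos (NeZero.pos p) d), ← pow_succ']
    exact (pow_dvd_pow p hde).trans hj
  obtain ⟨v, hv, hvx⟩ := h.exists_semiconjBy (npow_mem_zpowers b i)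
  refine ⟨v ^ p, by simpa using pow_pow_modEq_one_of_modEq_one hv 1, fun x hx => ?_⟩
  simpa [← pow_mul, mul_comm] using semiconjBy_pow_pow (hvx x hx) p

end NeZero

section Prime

variable [hp : Fact p.Prime]

theorem orderOf_mul_eq_iff (h : IsSplitMetacyclic p d e u a b) (hde : d < e)
    (hy : y ∈ zpowers b) (hx : x ∈ zpowers a) : orderOf (y * x) = p ^ e ↔ orderOf y = p ^ e := by
  refine ⟨fun hord => ?_, h.orderOf_mul_eq hde.le hy hx⟩
  obtain ⟨k, hk, hyk⟩ := (Nat.dvd_prime_pow hp.out).1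
    (h.orderOf_right ▸ orderOf_dvd_of_mem_zpowers hy)
  have hone : (y * x) ^ p ^ max k d = 1 := by
    rw [h.mul_pow_prime_pow hy hx (h.orderOf_dvd_pow hx (le_max_right k d)),
      ← orderOf_dvd_iff_pow_eq_one, hyk]
    exact pow_dvd_pow p (le_max_left k d)
  have hle : e ≤ max k d := (Nat.pow_dvd_pow_iff_le_right hp.out.one_lt).1
    (hord ▸ orderOf_dvd_of_pow_eq_one hone)
  rw [hyk, show k = e by lia]

theorem isExactBicyclicPair_mul_right_iff (h : IsSplitMetacyclic p d e u a b)
    (hde : d < e) (hy : y ∈ zpowers b) (hx : x ∈ zpowers a) :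
    IsExactBicyclicPair (p ^ d) (p ^ e) (y * x) b ↔ y ^ p ^ d = 1 ∧ orderOf x = p ^ d := by
  have := h.finite
  rw [isExactBicyclicPair_iff_disjoint h.natCard_eq]
  have hpow : (y * x) ^ p ^ d = y ^ p ^ d := h.mul_pow_prime_pow hy hx (h.orderOf_dvd_pow hx le_rfl)
  constructor
  · rintro ⟨hord, -, hdisj⟩
    refine ⟨by rw [← hpow, ← hord, pow_orderOf_eq_one], ?_⟩
    refine Nat.dvd_antisymm (h.orderOf_dvd_pow hx le_rfl) ?_
    obtain ⟨k, -, hk⟩ := (Nat.dvd_prime_pow hp.out).1 (h.orderOf_dvd_pow hx le_rfl)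
    have hmem : (y * x) ^ p ^ k ∈ zpowers b := by
      rw [h.mul_pow_prime_pow hy hx hk.dvd]
      exact pow_mem hy _
    rw [hk, ← hord]
    exact orderOf_dvd_of_pow_eq_one (disjoint_def.1 hdisj (npow_mem_zpowers _ _) hmem)
  · rintro ⟨hyd, hxd⟩
    obtain ⟨v, hv, hyx⟩ := h.exists_semiconjBy_of_pow_eq_one hde hy hyd
    have hdvd {n : ℕ} (hn : (y * x) ^ n ∈ zpowers b) : p ^ d ∣ n := by
      rw [mul_pow_of_semiconjBy (hyx x hx), mul_mem_cancel_left (pow_mem hy n)] at hn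
      apply pow_dvd_of_pow_dvd_geom_sum hv
      rw [← hxd, orderOf_dvd_iff_pow_eq_one]
      exact disjoint_def.1 h.isComplement'.disjoint hn (pow_mem hx _)
    have hord : orderOf (y * x) = p ^ d :=
      Nat.dvd_antisymm (orderOf_dvd_of_pow_eq_one (hpow.trans hyd))
        (hdvd (by simp [pow_orderOf_eq_one]))
    refine ⟨hord, h.orderOf_right, disjoint_def.2 fun hg hgb => ?_⟩
    obtain ⟨n, rfl⟩ := mem_powers_iff_mem_zpowers.2 hg
    exact orderOf_dvd_iff_pow_eq_one.1 (hord ▸ hdvd hgb)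

theorem natCard_orderOf_eq (h : IsSplitMetacyclic p d e u a b) (hde : d < e) :
    Nat.card {β : G // orderOf β = p ^ e} = (p ^ e).totient * p ^ d := by
  have := h.finite
  rw [natCard_subtype_of_isComplement' h.isComplement' (A := fun y => orderOf y = p ^ e)
      (B := fun _ => True) fun y x => by
        rw [h.orderOf_mul_eq_iff hde y.2 x.2, orderOf_coe, and_true],
    natCard_orderOf_eq_of_isCyclic (by rw [Nat.card_zpowers, h.orderOf_right]),
    Nat.card_congr (Equiv.subtypeUnivEquiv fun _ => trivial), Nat.card_zpowers, h.orderOf_left]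

theorem natCard_isExactBicyclicPair_right (h : IsSplitMetacyclic p d e u a b)
    (hde : d < e) : Nat.card {α : G // IsExactBicyclicPair (p ^ d) (p ^ e) α b} =
      p ^ d * (p ^ d).totient := by
  have := h.finite
  rw [natCard_subtype_of_isComplement' h.isComplement' (A := fun y => y ^ p ^ d = 1)
      (B := fun x => orderOf x = p ^ d) fun y x => by
        rw [h.isExactBicyclicPair_mul_right_iff hde y.2 x.2, orderOf_coe]
        norm_cast,
    natCard_pow_eq_one_of_isCyclic,
    natCard_orderOf_eq_of_isCyclic (by rw [Nat.card_zpowers, h.orderOf_left]),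
    Nat.card_zpowers, h.orderOf_right, Nat.gcd_eq_right (pow_dvd_pow p hde.le)]

theorem exists_of_orderOf_eq (h : IsSplitMetacyclic p d e u a b) (hde : d < e) {β : G}
    (hβ : orderOf β = p ^ e) : ∃ v, IsSplitMetacyclic p d e v a β := by
  obtain ⟨⟨⟨y, hy⟩, x, hx⟩, rfl⟩ := h.isComplement'.surjective β
  exact h.exists_mul_right hde.le hy hx ((h.orderOf_mul_eq_iff hde hy hx).1 hβ)

theorem natCard_isExactBicyclicPair (h : IsSplitMetacyclic p d e u a b) (hde : d < e) :
    Nat.card {x : G × G // IsExactBicyclicPair (p ^ d) (p ^ e) x.1 x.2} =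
      (p ^ e).totient * p ^ d * (p ^ d * (p ^ d).totient) := by
  have := h.finite
  rw [← h.natCard_orderOf_eq hde]
  refine natCard_subtype_prod_eq_mul (fun α β hαβ => hαβ.2.1) fun β hβ => ?_
  obtain ⟨v, hv⟩ := h.exists_of_orderOf_eq hde hβ
  exact hv.natCard_isExactBicyclicPair_right hde

end Prime

end IsSplitMetacyclic

section Presentation

variable {p d e f : ℕ}

theorem M2a_pow : M2a p d e f ^ p ^ d = 1 :=
  PresentedGroup.one_of_mem (rels := M2rels p d e f) (Or.inl rfl)

theorem M2b_pow : M2b p d e f ^ p ^ e = 1 :=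
  PresentedGroup.one_of_mem (rels := M2rels p d e f) (Or.inr (Or.inl rfl))

theorem semiconjBy_M2b : SemiconjBy (M2b p d e f) (M2a p d e f ^ (1 + p ^ f)) (M2a p d e f) := by
  have h : (M2b p d e f)⁻¹ * M2a p d e f * M2b p d e f * (M2a p d e f ^ (1 + p ^ f))⁻¹ = 1 :=
    PresentedGroup.one_of_mem (rels := M2rels p d e f) (Or.inr (Or.inr rfl))
  rw [mul_inv_eq_one, mul_assoc, inv_mul_eq_iff_eq_mul] at h
  exact h.symm

theorem closure_M2a_M2b : Subgroup.closure {M2a p d e f, M2b p d e f} = ⊤ := by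
  rw [← PresentedGroup.closure_range_of (M2rels p d e f)]
  congr 1
  ext g
  simp [Fin.exists_fin_two, M2a, M2b, eq_comm]

theorem exists_M2_hom {H : Type*} [Group H] {x y : H} (hx : x ^ p ^ d = 1) (hy : y ^ p ^ e = 1)
    (hxy : SemiconjBy y (x ^ (1 + p ^ f)) x) :
    ∃ φ : M2 p d e f →* H, φ (M2a p d e f) = x ∧ φ (M2b p d e f) = y := by
  have hrels : ∀ r ∈ M2rels p d e f, FreeGroup.lift ![x, y] r = 1 := by
    rintro r (rfl | rfl | rfl)
    · simpa using hx
    · simpa using hy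
    · have hconj : y⁻¹ * x * y = x ^ (1 + p ^ f) := by
        rw [mul_assoc, inv_mul_eq_iff_eq_mul, hxy.eq]
      simpa [mul_inv_eq_one] using hconj
  exact ⟨PresentedGroup.toGroup hrels, PresentedGroup.toGroup.of hrels,
    PresentedGroup.toGroup.of hrels⟩

theorem one_add_pow_modEq_one (hf : f ≠ 0) : 1 + p ^ f ≡ 1 [MOD p] := by
  simpa using (Nat.modEq_zero_iff_dvd.2 (dvd_pow_self p hf)).add_left 1

/-- The order of `a` is detected by the affine group of `ZMod (p ^ d)`, in which `a` acts as
`z ↦ z + 1` and `b⁻¹` as multiplication by `1 + p ^ f`. -/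
theorem orderOf_M2a [NeZero p] (hf : f ≠ 0) (hde : d ≤ e) : orderOf (M2a p d e f) = p ^ d := by
  have hpow : ((1 + p ^ f : ℕ) : ZMod (p ^ d)) ^ p ^ e = 1 := by
    have := (pow_pow_modEq_one_of_modEq_one (one_add_pow_modEq_one (p := p) hf) e).of_dvd
      (pow_dvd_pow p (hde.trans e.le_succ))
    simpa using (ZMod.natCast_eq_natCast_iff _ _ _).2 this
  let u : (ZMod (p ^ d))ˣ := Units.ofPowEqOne _ _ hpow (NeZero.ne _)
  have hu : u ^ p ^ e = 1 := Units.pow_ofPowEqOne hpow (NeZero.ne _)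
  let x : Equiv.Perm (ZMod (p ^ d)) := Equiv.addRight 1
  let y : Equiv.Perm (ZMod (p ^ d)) := MulAction.toPermHom _ _ u⁻¹
  have hx (n : ℕ) : x ^ n = Equiv.addRight (n : ZMod (p ^ d)) := by simp [x]
  have hx1 : x ^ p ^ d = 1 := Equiv.ext fun z => by simp [hx]
  have hy : y ^ p ^ e = 1 := by simp only [y, ← map_pow, inv_pow, hu, inv_one, map_one]
  have hxy : SemiconjBy y (x ^ (1 + p ^ f)) x := Equiv.ext fun z => by
    have hu' : (u : ZMod (p ^ d)) = (1 + p ^ f : ℕ) := rfl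
    rw [hx, ← hu']
    simp [x, y, Units.smul_def]
  obtain ⟨φ, ha, -⟩ := exists_M2_hom hx1 hy hxy
  refine Nat.dvd_antisymm (orderOf_dvd_of_pow_eq_one M2a_pow) ?_
  have h1 : x ^ orderOf (M2a p d e f) = 1 := by rw [← ha, ← map_pow, pow_orderOf_eq_one, map_one]
  rw [hx] at h1
  exact (ZMod.natCast_eq_zero_iff _ _).1 (by simpa using Equiv.congr_fun h1 0)

theorem dvd_of_M2b_pow_mem_zpowers {n : ℕ} (hn : M2b p d e f ^ n ∈ Subgroup.zpowers (M2a p d e f)) :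
    p ^ e ∣ n := by
  obtain ⟨ψ, ha, hb⟩ := exists_M2_hom (p := p) (d := d) (e := e) (f := f)
    (x := (1 : Multiplicative (ZMod (p ^ e)))) (y := Multiplicative.ofAdd 1) (one_pow _)
    (by simp [← ofAdd_nsmul])
    (by rw [one_pow]; exact SemiconjBy.one_right _)
  obtain ⟨k, hk⟩ := Subgroup.mem_zpowers_iff.1 hn
  have h := congrArg ψ hk
  rw [map_zpow, map_pow, ha, hb, one_zpow, ← ofAdd_nsmul, nsmul_one, eq_comm, ofAdd_eq_one] at h
  exact (ZMod.natCast_eq_zero_iff _ _).1 h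

theorem orderOf_M2b : orderOf (M2b p d e f) = p ^ e :=
  Nat.dvd_antisymm (orderOf_dvd_of_pow_eq_one M2b_pow)
    (dvd_of_M2b_pow_mem_zpowers (by rw [pow_orderOf_eq_one]; exact one_mem _))

theorem disjoint_zpowers_M2b_M2a [NeZero p] :
    Disjoint (Subgroup.zpowers (M2b p d e f)) (Subgroup.zpowers (M2a p d e f)) := by
  refine Subgroup.disjoint_def.2 fun hb ha => ?_
  have hfin : IsOfFinOrder (M2b p d e f) :=
    isOfFinOrder_iff_pow_eq_one.2 ⟨p ^ e, Nat.pos_of_neZero _, M2b_pow⟩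
  obtain ⟨n, rfl⟩ := hfin.mem_powers_iff_mem_zpowers.2 hb
  exact orderOf_dvd_iff_pow_eq_one.1 (orderOf_M2b ▸ dvd_of_M2b_pow_mem_zpowers ha)

theorem isSplitMetacyclic_M2 [NeZero p] (hf : f ≠ 0) (hde : d ≤ e) :
    IsSplitMetacyclic p d e (1 + p ^ f) (M2a p d e f) (M2b p d e f) where
  orderOf_left := orderOf_M2a hf hde
  orderOf_right := orderOf_M2b
  isComplement' := by
    have hfin : IsOfFinOrder (M2a p d e f) :=
      isOfFinOrder_iff_pow_eq_one.2 ⟨p ^ d, Nat.pos_of_neZero _, M2a_pow⟩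
    have := normal_zpowers_of_semiconjBy hfin semiconjBy_M2b closure_M2a_M2b
    refine Subgroup.isComplement'_of_disjoint_and_mul_eq_univ disjoint_zpowers_M2b_M2a ?_
    rw [← Subgroup.mul_normal, Subgroup.zpowers_eq_closure, Subgroup.zpowers_eq_closure,
      ← Subgroup.closure_union, Set.singleton_union, Set.pair_comm, closure_M2a_M2b,
      Subgroup.coe_top]
  semiconjBy := semiconjBy_M2b
  modEq_one := one_add_pow_modEq_one hf

end Presentation

theorem stmt_9_general (p d e f : ℕ) (hp : p.Prime) (hf : 0 < f) (hd : 0 < d) (hde : d < e) :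
    Nat.card {x : M2 p d e f × M2 p d e f // IsExactBicyclicPair (p ^ d) (p ^ e) x.1 x.2} =
      p ^ (3 * d + e - 2) * (p - 1) ^ 2 := by
  have := Fact.mk hp
  rw [(isSplitMetacyclic_M2 hf.ne' hde.le).natCard_isExactBicyclicPair hde,
    Nat.totient_prime_pow hp hd, Nat.totient_prime_pow hp (hd.trans hde),
    show 3 * d + e - 2 = d + (d - 1) + (e - 1) + d by lia, pow_add, pow_add, pow_add]
  ring

/-- For `1 ≤ f < d < e`, the number of exact `(p^d,p^e)`-bicyclic pairs of
`M₂(p,d,e,f)` equals `p^(3d+e-2)(p-1)²`. -/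
theorem stmt_9 (p d e f : ℕ) (hp : p.Prime) (hodd : Odd p)
    (hf : 0 < f) (hfd : f < d) (hde : d < e) :
    Nat.card {x : M2 p d e f × M2 p d e f // IsExactBicyclicPair (p ^ d) (p ^ e) x.1 x.2} =
      p ^ (3 * d + e - 2) * (p - 1) ^ 2 :=
  stmt_9_general p d e f hp hf (hf.trans hfd) hde
end

section
/- Let p be an odd prime, let d, e, f be positive integers with d ≤ e, f ≤ e and e ≤ d + f, and let G = M₁(p,d,e,f) with canonical generators a, b. For integers r, s, t, u, the assignment a ↦ bʳaˢ, b ↦ bᵗaᵘ extends to an automorphism of G if and only if one of the following holds: (i) f = e = d and ru − st ≢ 0 (mod p); (ii) f < e = d, r ≡ 0 (mod p^{e−f}), t ≡ 1 (mod p^{e−f}) and s ≢ 0 (mod p); (iii) d < f = e, u ≡ 0 (mod p^{e−d}) and st ≢ 0 (mod p); (iv) d ≤ f < e, u ≡ 0 (mod p^{e−d}), t ≡ 1 (mod p^{e−f}) and s ≢ 0 (mod p); (v) f < d < e, r ≡ 0 (mod p^{d−f}), u ≡ 0 (mod p^{e−d}), t ≡ 1 (mod p^{e−f}) and s ≢ 0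 (mod p). -/
/-!
Put `x = bʳaˢ` and `y = bᵗaᵘ`. The assignment `a ↦ x`, `b ↦ y` extends to an automorphism of the
finite group `G` if and only if `x` and `y` satisfy the defining relations and generate `G`.

Since `G` is a `p`-group, every proper subgroup lies in the kernel of a nontrivial character
`G → ℤ/p`. Such a character is given by an arbitrary pair of values on `a` and `b`, so `x` and `y`
generate `G` exactly when the matrix with rows `(r, s)` and `(t, u)` is invertible modulo `p`.

Every element of `G` is `bⁱaʲ` with `i` unique modulo `p ^ d` and `j` unique modulo `p ^ e`. The
exponent of `a` in a power of `bⁱaʲ` involves a geometric sum of ratio `Q ≡ 1 (mod p)`, and for odd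
`p` such a sum of length `p ^ k` is `p ^ k` up to a multiple of `p ^ k * (Q - 1)`. Together with
lifting the exponent, this turns the relations into `p ^ d ∣ r * p ^ f`, `p ^ e ∣ u * p ^ d` and
`p ^ e ∣ s * p ^ f * (t - 1)`. Unless `d = e = f`, the first two force `p ∣ r * u`, which
decouples the conditions on `s` and `t` from those on `r` and `u`.
-/

section GeomSum

variable {R : Type*} [CommRing R] {n : ℕ} {Q : R}

theorem sub_one_dvd_geom_sum_sub_natCast (Q : R) (n : ℕ) :
    Q - 1 ∣ ∑ i ∈ Finset.range n, Q ^ i - n := by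
  have hsum : ∑ i ∈ Finset.range n, Q ^ i - n = ∑ i ∈ Finset.range n, (Q ^ i - 1) := by simp
  exact hsum ▸ Finset.dvd_sum fun i _ => sub_one_dvd_pow_sub_one Q i

theorem geom_sum_range_mul {S : Type*} [Semiring S] (Q : S) (m n : ℕ) :
    ∑ i ∈ Finset.range (m * n), Q ^ i =
      (∑ i ∈ Finset.range m, Q ^ i) * ∑ i ∈ Finset.range n, (Q ^ m) ^ i := by
  induction n with
  | zero => simp
  | succ n ih =>
    rw [Nat.mul_succ, Finset.sum_range_add, ih, Finset.sum_range_succ, mul_add]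
    simp only [add_comm (m * n), pow_add, pow_mul, ← Finset.sum_mul]

theorem natCast_dvd_sum_range_of_odd (hn : Odd n) :
    (n : R) ∣ ∑ i ∈ Finset.range n, (i : R) := by
  have hdvd : n ∣ (∑ i ∈ Finset.range n, i) * 2 := ⟨n - 1, Finset.sum_range_id_mul_two n⟩
  rw [← Nat.cast_sum]
  exact Nat.cast_dvd_cast (hn.coprime_two_right.dvd_of_dvd_mul_right hdvd)

theorem natCast_mul_sub_one_dvd_geom_sum_sub (hn : Odd n) (hQ : (n : R) ∣ Q - 1) :
    n * (Q - 1) ∣ ∑ i ∈ Finset.range n, Q ^ i - n := by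
  have hdouble : ∑ i ∈ Finset.range n, Q ^ i - n =
      (∑ i ∈ Finset.range n, ∑ j ∈ Finset.range i, Q ^ j) * (Q - 1) := by
    rw [Finset.sum_mul]; simp [geom_sum_mul]
  have hsplit : ∑ i ∈ Finset.range n, ∑ j ∈ Finset.range i, Q ^ j =
      ∑ i ∈ Finset.range n, (∑ j ∈ Finset.range i, Q ^ j - i) + ∑ i ∈ Finset.range n, (i : R) := by
    simp
  rw [hdouble, hsplit]
  refine mul_dvd_mul_right (dvd_add (Finset.dvd_sum fun i _ => ?_) ?_) _
  · exact hQ.trans (sub_one_dvd_geom_sum_sub_natCast Q i)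
  · exact natCast_dvd_sum_range_of_odd hn

theorem natCast_pow_mul_sub_one_dvd_geom_sum_sub (hn : Odd n) (hQ : (n : R) ∣ Q - 1) (k : ℕ) :
    (n : R) ^ k * (Q - 1) ∣ ∑ i ∈ Finset.range (n ^ k), Q ^ i - (n : R) ^ k := by
  induction k with
  | zero => simp
  | succ k ih =>
    obtain ⟨c, hc⟩ := ih
    rw [sub_eq_iff_eq_add] at hc
    have hQk : Q ^ n ^ k - 1 = n ^ k * (Q - 1) * (1 + (Q - 1) * c) := by
      rw [← geom_sum_mul, hc]
      ring
    obtain ⟨c', hc'⟩ := natCast_mul_sub_one_dvd_geom_sum_sub hn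
      (Q := Q ^ n ^ k) (hQ.trans (sub_one_dvd_pow_sub_one Q _))
    rw [sub_eq_iff_eq_add, hQk] at hc'
    rw [pow_succ, pow_succ, geom_sum_range_mul, hc, hc']
    exact ⟨c + n ^ k * (1 + (Q - 1) * c) ^ 2 * c', by ring⟩

theorem natCast_pow_mul_sub_one_dvd_geom_sum_one_add_sub (hn : Odd n) (hQ : (n : R) ∣ Q - 1)
    (k : ℕ) :
    (n : R) ^ k * (Q - 1) ∣ ∑ i ∈ Finset.range (1 + n ^ k), Q ^ i - (1 + (n : R) ^ k) := by
  obtain ⟨c, hc⟩ := natCast_pow_mul_sub_one_dvd_geom_sum_sub hn hQ k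
  rw [sub_eq_iff_eq_add] at hc
  rw [add_comm, geom_sum_succ, hc]
  exact ⟨Q * c + 1, by ring⟩

theorem natCast_pow_dvd_mul_geom_sum_iff (hn : Odd n) (hQ : (n : R) ∣ Q - 1) (m k : ℕ) (c : R) :
    (n : R) ^ m ∣ c * ∑ i ∈ Finset.range (n ^ k), Q ^ i ↔ (n : R) ^ m ∣ c * (n : R) ^ k := by
  obtain ⟨w, hw⟩ := natCast_pow_mul_sub_one_dvd_geom_sum_sub hn hQ k
  have hcop : IsCoprime ((n : R) ^ m) (1 + (Q - 1) * w) := by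
    obtain ⟨l, hl⟩ := hQ
    exact IsCoprime.pow_left ⟨-(l * w), 1, by rw [hl]; ring⟩
  have hfactor : c * ∑ i ∈ Finset.range (n ^ k), Q ^ i = (1 + (Q - 1) * w) * (c * (n : R) ^ k) := by
    rw [sub_eq_iff_eq_add.mp hw]
    ring
  rw [hfactor]
  exact ⟨hcop.dvd_of_dvd_mul_left, fun h => h.mul_left _⟩

theorem natCast_pow_dvd_geom_sum_one_add_sub (hn : Odd n) (hQ : (n : R) ∣ Q - 1) {d e f : ℕ}
    (hQd : (n : R) ^ d ∣ Q - 1) (hedf : e ≤ d + f) :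
    (n : R) ^ e ∣ ∑ i ∈ Finset.range (1 + n ^ f), Q ^ i - (1 + (n : R) ^ f) :=
  calc (n : R) ^ e ∣ (n : R) ^ f * (n : R) ^ d := by
        rw [← pow_add, add_comm]
        exact pow_dvd_pow _ hedf
    _ ∣ (n : R) ^ f * (Q - 1) := mul_dvd_mul_left _ hQd
    _ ∣ _ := natCast_pow_mul_sub_one_dvd_geom_sum_one_add_sub hn hQ f

end GeomSum

section PrimePower

variable {p : ℕ}

theorem emultiplicity_pow_sub_pow_of_dvd_sub_one (hp : p.Prime) (hodd : Odd p)
    {Q : ℤ} (hQ : (p : ℤ) ∣ Q - 1) (k l : ℕ) :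
    emultiplicity (p : ℤ) (Q ^ k - Q ^ l) = emultiplicity (p : ℤ) ((Q - 1) * (k - l)) := by
  wlog hlk : l ≤ k generalizing k l
  · rw [← neg_sub (Q ^ l), emultiplicity_neg, this l k (le_of_not_ge hlk), ← neg_sub (k : ℤ),
      mul_neg, emultiplicity_neg]
  obtain ⟨n, rfl⟩ := Nat.exists_eq_add_of_le hlk
  have hpZ : Prime (p : ℤ) := Nat.prime_iff_prime_int.mp hp
  have hpQ : ¬ (p : ℤ) ∣ Q := fun h => hpZ.not_dvd_one (by simpa using dvd_sub h hQ)
  have hlte : emultiplicity (p : ℤ) (Q ^ n - 1) = emultiplicity (p : ℤ) ((Q - 1) * n) := by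
    simpa [emultiplicity_mul hpZ, Int.natCast_emultiplicity] using
      Int.emultiplicity_pow_sub_pow hp hodd hQ hpQ n
  have hfactor : Q ^ (l + n) - Q ^ l = Q ^ l * (Q ^ n - 1) := by ring
  rw [hfactor, emultiplicity_mul hpZ, hlte,
    emultiplicity_eq_zero.mpr (hpZ.dvd_of_dvd_pow.mt hpQ), zero_add]
  push_cast
  rw [add_sub_cancel_left]

theorem pow_dvd_mul_pow_sub_pow_iff (hp : p.Prime) (hodd : Odd p) {Q : ℤ}
    (hQ : (p : ℤ) ∣ Q - 1) (m k l : ℕ) (c : ℤ) :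
    (p : ℤ) ^ m ∣ c * (Q ^ k - Q ^ l) ↔ (p : ℤ) ^ m ∣ c * ((Q - 1) * (k - l)) := by
  have hpZ : Prime (p : ℤ) := Nat.prime_iff_prime_int.mp hp
  rw [pow_dvd_iff_le_emultiplicity, pow_dvd_iff_le_emultiplicity, emultiplicity_mul hpZ,
    emultiplicity_mul hpZ, emultiplicity_pow_sub_pow_of_dvd_sub_one hp hodd hQ]

theorem pow_dvd_one_add_pow_pow_sub_one_iff (hp : p.Prime) (hodd : Odd p) {f : ℕ} (hf : 0 < f)
    (m k : ℕ) : (p : ℤ) ^ m ∣ (1 + (p : ℤ) ^ f) ^ k - 1 ↔ (p : ℤ) ^ m ∣ k * (p : ℤ) ^ f := by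
  simpa [mul_comm] using
    pow_dvd_mul_pow_sub_pow_iff (Q := 1 + (p : ℤ) ^ f) hp hodd (by simp [hf.ne']) m k 0 1

theorem mul_one_add_pow_add_modEq_iff (hp : p.Prime) (hodd : Odd p) {d e f r : ℕ} (hf : 0 < f)
    (hedf : e ≤ d + f) (hr : (p : ℤ) ^ d ∣ r * (p : ℤ) ^ f) {u : ℤ}
    (hu : (p : ℤ) ^ e ∣ u * (p : ℤ) ^ d) (s : ℤ) (t : ℕ) :
    s * (1 + (p : ℤ) ^ f) ^ t + u ≡ u * (1 + (p : ℤ) ^ f) ^ (r * (1 + p ^ f)) +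
        s * ∑ k ∈ Finset.range (1 + p ^ f), ((1 + (p : ℤ) ^ f) ^ r) ^ k [ZMOD (p : ℤ) ^ e] ↔
      (p : ℤ) ^ e ∣ s * ((p : ℤ) ^ f * (t - 1)) := by
  have hq : (p : ℤ) ∣ 1 + (p : ℤ) ^ f - 1 := by simp [hf.ne']
  have hqr : (p : ℤ) ^ d ∣ (1 + (p : ℤ) ^ f) ^ r - 1 :=
    (pow_dvd_one_add_pow_pow_sub_one_iff hp hodd hf d r).mpr hr
  have hupow : (p : ℤ) ^ e ∣ u * ((1 + (p : ℤ) ^ f) ^ (r * (1 + p ^ f)) - 1) := by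
    rw [pow_mul]
    exact hu.trans (mul_dvd_mul_left u (hqr.trans (sub_one_dvd_pow_sub_one _ _)))
  have hgeom := natCast_pow_dvd_geom_sum_one_add_sub hodd
    (hq.trans (sub_one_dvd_pow_sub_one _ r)) hqr hedf
  have hlte := pow_dvd_mul_pow_sub_pow_iff hp hodd hq e t 1 s
  rw [add_sub_cancel_left, Nat.cast_one] at hlte
  rw [← hlte, Int.modEq_comm, Int.modEq_iff_dvd]
  refine dvd_iff_dvd_of_dvd_sub ?_
  convert (dvd_add hupow (hgeom.mul_left s)).neg_right using 1
  ring

end PrimePower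

section PrimeElement

variable {R : Type*} [CommRing R] {π s t : R}

theorem pow_dvd_mul_pow_iff_pow_sub_dvd [IsDomain R] (hπ : π ≠ 0) (m n : ℕ) (c : R) :
    π ^ m ∣ c * π ^ n ↔ π ^ (m - n) ∣ c := by
  rcases le_total n m with h | h
  · rw [← pow_sub_mul_pow π h, mul_dvd_mul_iff_right (pow_ne_zero n hπ)]
  · simp [Nat.sub_eq_zero_of_le h, (pow_dvd_pow π h).mul_left c]

theorem pow_dvd_mul_sub_one_and_not_dvd_sub_iff [IsDomain R] (hπ : Prime π) {c : R}
    (hc : π ∣ c) (k : ℕ) :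
    π ^ k ∣ s * (t - 1) ∧ ¬ π ∣ c - s * t ↔ π ^ k ∣ t - 1 ∧ ¬ π ∣ s * t := by
  rw [dvd_sub_right hc]
  refine and_congr_left fun hst => ⟨fun h => ?_, fun h => h.mul_left s⟩
  exact hπ.pow_dvd_of_dvd_mul_left k (fun hs => hst (hs.mul_right t)) h

theorem pow_dvd_sub_one_and_not_dvd_mul_iff (hπ : Prime π) {k : ℕ} (hk : 0 < k) :
    π ^ k ∣ t - 1 ∧ ¬ π ∣ s * t ↔ π ^ k ∣ t - 1 ∧ ¬ π ∣ s := by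
  refine and_congr_right fun h => not_congr ?_
  have ht : ¬ π ∣ t := fun ht =>
    hπ.not_dvd_one (by simpa using dvd_sub ht ((dvd_pow_self π hk.ne').trans h))
  rw [hπ.dvd_mul, or_iff_left ht]

end PrimeElement

section NormalForm

variable {G : Type*} [Group G] {a b : G} {q : ℤ}

theorem zpow_mul_pow_of_mul_eq (h : a * b = b * a ^ q) (j : ℤ) (k : ℕ) :
    a ^ j * b ^ k = b ^ k * a ^ (j * q ^ k) := by
  have hstep (j : ℤ) : a ^ j * b = b * a ^ (j * q) := by
    have hconj : SemiconjBy b (a ^ q) a := h.symm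
    rw [mul_comm j q, zpow_mul]
    exact (hconj.zpow_right j).eq.symm
  induction k generalizing j with
  | zero => simp
  | succ k ih => rw [pow_succ, ← mul_assoc, ih, mul_assoc, hstep, pow_succ, mul_assoc j, mul_assoc]

theorem pow_mul_zpow_mul_pow_mul_zpow (h : a * b = b * a ^ q) (i k : ℕ) (j l : ℤ) :
    b ^ i * a ^ j * (b ^ k * a ^ l) = b ^ (i + k) * a ^ (j * q ^ k + l) := by
  rw [mul_assoc, ← mul_assoc (a ^ j), zpow_mul_pow_of_mul_eq h, pow_add, zpow_add]
  simp only [mul_assoc]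

theorem pow_mul_zpow_pow (h : a * b = b * a ^ q) (i n : ℕ) (j : ℤ) :
    (b ^ i * a ^ j) ^ n = b ^ (i * n) * a ^ (j * ∑ k ∈ Finset.range n, (q ^ i) ^ k) := by
  induction n with
  | zero => simp
  | succ n ih =>
    rw [pow_succ, ih, pow_mul_zpow_mul_pow_mul_zpow h, geom_sum_succ]
    congr 2
    ring

theorem exists_eq_pow_mul_zpow_of_mem_closure (h : a * b = b * a ^ q) (hb : IsOfFinOrder b) {g : G}
    (hg : g ∈ Subgroup.closure {a, b}) : ∃ (i : ℕ) (j : ℤ), g = b ^ i * a ^ j := by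
  have hmul_b (i k : ℕ) (j : ℤ) : b ^ i * a ^ j * b ^ k = b ^ (i + k) * a ^ (j * q ^ k) := by
    simpa using pow_mul_zpow_mul_pow_mul_zpow h i k j 0
  obtain ⟨n, hn⟩ : ∃ n : ℕ, b ^ n = b⁻¹ := by
    simpa [Submonoid.mem_powers_iff] using
      hb.mem_powers_iff_mem_zpowers.mpr (inv_mem (Subgroup.mem_zpowers b))
  induction hg using Subgroup.closure_induction_right with
  | one => exact ⟨0, 0, by simp⟩
  | mul_right _ _ x hx ih =>
    obtain ⟨i, j, rfl⟩ := ih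
    rcases hx with rfl | rfl
    · exact ⟨i, j + 1, by rw [zpow_add_one, mul_assoc]⟩
    · exact ⟨i + 1, _, by simpa using hmul_b i 1 j⟩
  | mul_inv_cancel _ _ x hx ih =>
    obtain ⟨i, j, rfl⟩ := ih
    rcases hx with rfl | rfl
    · exact ⟨i, j - 1, by rw [zpow_sub_one, mul_assoc]⟩
    · exact ⟨i + n, _, hn ▸ hmul_b i n j⟩

end NormalForm

section PGroup

variable {p : ℕ} {G : Type*} [Group G]

theorem exists_normal_index_eq_of_ne_top (hp : p.Prime) [Finite G] (hG : IsPGroup p G)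
    {H : Subgroup G} (hH : H ≠ ⊤) : ∃ K : Subgroup G, H ≤ K ∧ K.Normal ∧ K.index = p := by
  have : Fact p.Prime := ⟨hp⟩
  obtain ⟨n, hn⟩ := hG.exists_card_eq
  obtain ⟨m, hm⟩ := (hG.to_subgroup H).exists_card_eq
  have hmn : m < n := (Nat.pow_lt_pow_iff_right hp.one_lt).mp <| by
    rw [← hm, ← hn]
    exact lt_of_le_of_ne H.card_le_card_group (H.card_eq_iff_eq_top.not.mpr hH)
  obtain ⟨n, rfl⟩ := Nat.exists_eq_succ_of_ne_zero hmn.ne_bot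
  obtain ⟨K, hK, hHK⟩ := Sylow.exists_subgroup_card_pow_prime_le p
    (hn ▸ pow_dvd_pow p n.le_succ) H hm (Nat.lt_succ_iff.mp hmn)
  have hindex : K.index = p := Nat.eq_of_mul_eq_mul_left (pow_pos hp.pos n) <| by
    rw [← hK, K.card_mul_index, hn, hK, pow_succ]
  refine ⟨K, hHK, Subgroup.normal_of_index_eq_minFac_card ?_, hindex⟩
  rw [hindex, hn, hp.pow_minFac n.succ_ne_zero]

theorem eq_top_iff_forall_hom_zmod_eq_one (hp : p.Prime) [Finite G] (hG : IsPGroup p G)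
    (H : Subgroup G) :
    H = ⊤ ↔ ∀ χ : G →* Multiplicative (ZMod p), H ≤ χ.ker → χ = 1 := by
  refine ⟨?_, fun h => ?_⟩
  · rintro rfl χ hχ
    exact MonoidHom.ker_eq_top_iff.mp (top_le_iff.mp hχ)
  · by_contra hH
    obtain ⟨K, hHK, hKn, hK⟩ := exists_normal_index_eq_of_ne_top hp hG hH
    have : Fact p.Prime := ⟨hp⟩
    let ε : G ⧸ K ≃* Multiplicative (ZMod p) := mulEquivOfPrimeCardEq (p := p) hK (by simp)
    have hker : (ε.toMonoidHom.comp (QuotientGroup.mk' K)).ker = K := by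
      rw [MulEquiv.toMonoidHom_eq_coe, MonoidHom.ker_mulEquiv_comp, QuotientGroup.ker_mk']
    have hχ := h _ (hker.symm ▸ hHK)
    rw [hχ, MonoidHom.ker_one] at hker
    exact hp.one_lt.ne' (by rw [← hK, ← hker, Subgroup.index_top])

end PGroup

namespace M1

variable {p d e f : ℕ}

theorem closure_pair_eq_top : Subgroup.closure {M1a p d e f, M1b p d e f} = ⊤ := by
  rw [eq_top_iff, ← PresentedGroup.closure_range_of, Subgroup.closure_le]
  rintro _ ⟨i, rfl⟩
  fin_cases i
  · exact Subgroup.subset_closure (Set.mem_insert _ _)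
  · exact Subgroup.subset_closure (Set.mem_insert_of_mem _ rfl)

section UniversalProperty

variable {G : Type*} [Group G] {x y : G}

/-- The elements `x` and `y` satisfy the defining relations of `M₁(p,d,e,f)`, with `x` in the role
of `a` and `y` in the role of `b`. The last relation is written without inverses, with an integer
exponent. -/
def SatisfiesRelations (p d e f : ℕ) (x y : G) : Prop :=
  x ^ p ^ e = 1 ∧ y ^ p ^ d = 1 ∧ x * y = y * x ^ (1 + (p : ℤ) ^ f)

theorem satisfiesRelations_generators : SatisfiesRelations p d e f (M1a p d e f) (M1b p d e f) := by
  refine ⟨PresentedGroup.one_of_mem (x := FreeGroup.of 0 ^ p ^ e) (by simp [M1rels]),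
    PresentedGroup.one_of_mem (x := FreeGroup.of 1 ^ p ^ d) (by simp [M1rels]), ?_⟩
  have hrel : (M1b p d e f)⁻¹ * M1a p d e f * M1b p d e f * (M1a p d e f ^ (1 + p ^ f))⁻¹ = 1 :=
    PresentedGroup.one_of_mem (x := (FreeGroup.of 1)⁻¹ * FreeGroup.of 0 * FreeGroup.of 1 *
      (FreeGroup.of 0 ^ (1 + p ^ f))⁻¹) (by simp [M1rels])
  rw [mul_inv_eq_one, mul_assoc, inv_mul_eq_iff_eq_mul] at hrel
  exact_mod_cast hrel

theorem a_pow : M1a p d e f ^ p ^ e = 1 :=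
  satisfiesRelations_generators.1

theorem b_pow : M1b p d e f ^ p ^ d = 1 :=
  satisfiesRelations_generators.2.1

theorem a_mul_b :
    M1a p d e f * M1b p d e f = M1b p d e f * M1a p d e f ^ (1 + (p : ℤ) ^ f) :=
  satisfiesRelations_generators.2.2

/-- The universal property of the presentation: the homomorphism `M₁(p,d,e,f) → G` with `a ↦ x`
and `b ↦ y`, for `x` and `y` satisfying the defining relations. -/
def lift (h : SatisfiesRelations p d e f x y) : M1 p d e f →* G :=
  PresentedGroup.toGroup (f := ![x, y]) <| by
    obtain ⟨hx, hy, hxy⟩ := h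
    have hxy' : x * y = y * x ^ (1 + p ^ f) := by exact_mod_cast hxy
    rintro g (rfl | rfl | rfl)
    · simpa using hx
    · simpa using hy
    · simpa [mul_assoc, inv_mul_eq_iff_eq_mul, ← mul_inv_eq_iff_eq_mul] using hxy'

@[simp]
theorem lift_a (h : SatisfiesRelations p d e f x y) : lift h (M1a p d e f) = x :=
  PresentedGroup.toGroup.of _

@[simp]
theorem lift_b (h : SatisfiesRelations p d e f x y) : lift h (M1b p d e f) = y :=
  PresentedGroup.toGroup.of _

theorem hom_ext {φ ψ : M1 p d e f →* G} (ha : φ (M1a p d e f) = ψ (M1a p d e f))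
    (hb : φ (M1b p d e f) = ψ (M1b p d e f)) : φ = ψ :=
  PresentedGroup.ext fun i => by fin_cases i <;> assumption

theorem SatisfiesRelations.map {H : Type*} [Group H] (h : SatisfiesRelations p d e f x y)
    (φ : G →* H) : SatisfiesRelations p d e f (φ x) (φ y) :=
  ⟨by rw [← map_pow, h.1, map_one], by rw [← map_pow, h.2.1, map_one],
    by rw [← map_mul, h.2.2, map_mul, map_zpow]⟩

end UniversalProperty

theorem exists_eq_b_pow_mul_a_zpow (hp : p ≠ 0) (g : M1 p d e f) :
    ∃ (i : ℕ) (j : ℤ), g = M1b p d e f ^ i * M1a p d e f ^ j :=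
  exists_eq_pow_mul_zpow_of_mem_closure a_mul_b
    (isOfFinOrder_iff_pow_eq_one.mpr ⟨p ^ d, pow_pos hp.bot_lt d, b_pow⟩)
    (closure_pair_eq_top ▸ Subgroup.mem_top g)

theorem finite (hp : p ≠ 0) : Finite (M1 p d e f) := by
  have ha : IsOfFinOrder (M1a p d e f) :=
    isOfFinOrder_iff_pow_eq_one.mpr ⟨p ^ e, pow_pos hp.bot_lt e, a_pow⟩
  have hb : IsOfFinOrder (M1b p d e f) :=
    isOfFinOrder_iff_pow_eq_one.mpr ⟨p ^ d, pow_pos hp.bot_lt d, b_pow⟩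
  refine Set.finite_univ_iff.mp (((finite_zpowers.mpr hb).mul (finite_zpowers.mpr ha)).subset ?_)
  intro g _
  obtain ⟨i, j, rfl⟩ := exists_eq_b_pow_mul_a_zpow hp g
  exact Set.mul_mem_mul (Subgroup.npow_mem_zpowers _ i) (Subgroup.zpow_mem_zpowers _ j)

theorem isPGroup (hp : p ≠ 0) : IsPGroup p (M1 p d e f) := by
  intro g
  obtain ⟨i, j, rfl⟩ := exists_eq_b_pow_mul_a_zpow hp g
  have ha (k : ℤ) : (M1a p d e f ^ k) ^ p ^ e = 1 := by
    rw [← zpow_natCast, zpow_comm, zpow_natCast, a_pow, one_zpow]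
  refine ⟨d + e, ?_⟩
  rw [pow_add, pow_mul, pow_mul_zpow_pow a_mul_b, mul_comm i, pow_mul, b_pow, one_pow, one_mul, ha]

theorem exists_mulAut_iff (hp : p ≠ 0) (x y : M1 p d e f) :
    (∃ φ : MulAut (M1 p d e f), φ (M1a p d e f) = x ∧ φ (M1b p d e f) = y) ↔
      SatisfiesRelations p d e f x y ∧ Subgroup.closure {x, y} = ⊤ := by
  constructor
  · rintro ⟨φ, rfl, rfl⟩
    refine ⟨satisfiesRelations_generators.map φ.toMonoidHom, ?_⟩
    rw [← Set.image_pair, ← MulEquiv.coe_toMonoidHom, ← MonoidHom.map_closure,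
      closure_pair_eq_top, Subgroup.map_top_of_surjective _ φ.surjective]
  · rintro ⟨hrel, hgen⟩
    have hsurj : Function.Surjective (lift hrel) := by
      rw [← MonoidHom.range_eq_top, eq_top_iff, ← hgen, Subgroup.closure_le]
      rintro _ (rfl | rfl)
      · exact ⟨_, lift_a hrel⟩
      · exact ⟨_, lift_b hrel⟩
    have := finite (d := d) (e := e) (f := f) hp
    exact ⟨MulEquiv.ofBijective _ ⟨Finite.injective_iff_surjective.mpr hsurj, hsurj⟩,
      lift_a hrel, lift_b hrel⟩

theorem exists_hom_zmod (hd : 0 < d) (he : 0 < e) (hf : 0 < f) (α β : ZMod p) :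
    ∃ χ : M1 p d e f →* Multiplicative (ZMod p),
      χ (M1a p d e f) = .ofAdd α ∧ χ (M1b p d e f) = .ofAdd β := by
  have hrel : SatisfiesRelations p d e f (Multiplicative.ofAdd α) (Multiplicative.ofAdd β) := by
    refine ⟨by simp [← ofAdd_nsmul, he.ne'], by simp [← ofAdd_nsmul, hd.ne'], ?_⟩
    rw [mul_comm, ← ofAdd_zsmul]
    simp [hf.ne', add_smul]
  exact ⟨lift hrel, lift_a hrel, lift_b hrel⟩

theorem closure_pair_eq_top_iff (hp : p.Prime) (hd : 0 < d) (he : 0 < e) (hf : 0 < f)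
    (r s t u : ℤ) :
    Subgroup.closure {M1b p d e f ^ r * M1a p d e f ^ s, M1b p d e f ^ t * M1a p d e f ^ u} = ⊤ ↔
      ¬ (p : ℤ) ∣ r * u - s * t := by
  have : Fact p.Prime := ⟨hp⟩
  have := finite (d := d) (e := e) (f := f) hp.ne_zero
  let A : Matrix (Fin 2) (Fin 2) (ZMod p) := !![(r : ZMod p), s; t, u]
  have hdet : (p : ℤ) ∣ r * u - s * t ↔ A.det = 0 := by
    rw [Matrix.det_fin_two_of, ← ZMod.intCast_zmod_eq_zero_iff_dvd]
    push_cast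
    rfl
  have hker (χ : M1 p d e f →* Multiplicative (ZMod p)) :
      Subgroup.closure {M1b p d e f ^ r * M1a p d e f ^ s, M1b p d e f ^ t * M1a p d e f ^ u} ≤
        χ.ker ↔ A.mulVec ![(χ (M1b p d e f)).toAdd, (χ (M1a p d e f)).toAdd] = 0 := by
    simp [A, Subgroup.closure_le, Set.pair_subset_iff, MonoidHom.mem_ker, funext_iff,
      Fin.forall_fin_two, ← toAdd_eq_zero, mul_comm, add_comm]
  rw [eq_top_iff_forall_hom_zmod_eq_one hp (isPGroup hp.ne_zero), hdet,
    ← Matrix.exists_mulVec_eq_zero_iff]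
  push Not
  constructor
  · intro h v hv hAv
    obtain ⟨χ, ha, hb⟩ := exists_hom_zmod hd he hf (v 1) (v 0)
    have hv' : ![v 0, v 1] = v := by ext i; fin_cases i <;> rfl
    have hχ : χ = 1 := h χ ((hker χ).mpr (by rw [ha, hb, toAdd_ofAdd, toAdd_ofAdd, hv', hAv]))
    refine hv ?_
    rw [← hv']
    simpa [hχ] using And.intro hb.symm ha.symm
  · intro h χ hχ
    have hzero := not_imp_not.mp (h _) ((hker χ).mp hχ)
    simp only [Matrix.cons_eq_zero_iff, toAdd_eq_zero, Matrix.zero_empty, and_true] at hzero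
    exact hom_ext hzero.2 hzero.1

theorem one_add_pow_pow_eq_one (hp : p.Prime) (hodd : Odd p) (hf : 0 < f) (hedf : e ≤ d + f) :
    (1 + (p : ZMod (p ^ e)) ^ f) ^ p ^ d = 1 := by
  have hdvd : (p : ℤ) ^ e ∣ (1 + (p : ℤ) ^ f) ^ p ^ d - 1 := by
    rw [pow_dvd_one_add_pow_pow_sub_one_iff hp hodd hf, Nat.cast_pow, ← pow_add]
    exact pow_dvd_pow _ hedf
  have hcast := (ZMod.intCast_zmod_eq_zero_iff_dvd _ (p ^ e)).mpr (by exact_mod_cast hdvd)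
  push_cast at hcast
  exact sub_eq_zero.mp hcast

theorem orderOf_a (hp : p.Prime) (hodd : Odd p) (hf : 0 < f) (hedf : e ≤ d + f) :
    orderOf (M1a p d e f) = p ^ e := by
  refine Nat.dvd_antisymm (orderOf_dvd_of_pow_eq_one a_pow) ?_
  -- The group acts on `ZMod (p ^ e)` with `a` as translation by `1` and `b` as multiplication
  -- by `(1 + p ^ f)⁻¹`, and `a` has order `p ^ e` in this action.
  let Q : (ZMod (p ^ e))ˣ := Units.ofPowEqOne _ (p ^ d)
    (one_add_pow_pow_eq_one hp hodd hf hedf) (pow_pos hp.pos d).ne'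
  have hQ : Q ^ p ^ d = 1 := Units.pow_ofPowEqOne _ _
  have hQinv (z : ZMod (p ^ e)) : Q⁻¹ • (z + (1 + (p : ZMod (p ^ e)) ^ f)) = Q⁻¹ • z + 1 := by
    rw [smul_add, Units.smul_def Q⁻¹ (1 + _), smul_eq_mul]
    exact congrArg _ Q.inv_mul
  let φ : M1 p d e f →* Equiv.Perm (ZMod (p ^ e)) :=
    lift (x := Equiv.addRight 1) (y := MulAction.toPermHom _ _ Q⁻¹)
      ⟨by ext; simp, by rw [← map_pow, inv_pow, hQ, inv_one, map_one], by ext z : 1; simp [hQinv]⟩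
  have hφ : φ (M1a p d e f) ^ orderOf (M1a p d e f) = 1 := by
    rw [← map_pow, pow_orderOf_eq_one, map_one]
  have hzero := DFunLike.congr_fun hφ 0
  simpa [φ, ZMod.natCast_eq_zero_iff] using hzero

/-- The projection of `M₁(p,d,e,f)` onto the quotient by `⟨a⟩`, which is cyclic of order `p ^ d`
and generated by the image of `b`. -/
def proj (p d e f : ℕ) : M1 p d e f →* Multiplicative (ZMod (p ^ d)) :=
  lift (x := 1) (y := .ofAdd 1) ⟨one_pow _, by simp [← ofAdd_nsmul], by simp⟩

@[simp]
theorem proj_a : proj p d e f (M1a p d e f) = 1 :=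
  lift_a _

@[simp]
theorem proj_b : proj p d e f (M1b p d e f) = .ofAdd 1 :=
  lift_b _

theorem orderOf_b : orderOf (M1b p d e f) = p ^ d := by
  refine Nat.dvd_antisymm (orderOf_dvd_of_pow_eq_one b_pow) ?_
  simpa [orderOf_ofAdd_eq_addOrderOf] using orderOf_map_dvd (proj p d e f) (M1b p d e f)

theorem b_pow_mul_a_zpow_eq_iff (hp : p.Prime) (hodd : Odd p) (hf : 0 < f) (hedf : e ≤ d + f)
    (i k : ℕ) (j l : ℤ) :
    M1b p d e f ^ i * M1a p d e f ^ j = M1b p d e f ^ k * M1a p d e f ^ l ↔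
      i ≡ k [MOD p ^ d] ∧ j ≡ l [ZMOD (p : ℤ) ^ e] := by
  have hb : M1b p d e f ^ i = M1b p d e f ^ k ↔ i ≡ k [MOD p ^ d] := by
    rw [pow_eq_pow_iff_modEq, orderOf_b]
  have ha : M1a p d e f ^ j = M1a p d e f ^ l ↔ j ≡ l [ZMOD (p : ℤ) ^ e] := by
    rw [zpow_eq_zpow_iff_modEq, orderOf_a hp hodd hf hedf, Nat.cast_pow]
  rw [← ha, ← hb]
  refine ⟨fun h => ?_, fun h => by rw [h.1, h.2]⟩
  have hproj : proj p d e f (M1b p d e f) ^ i = proj p d e f (M1b p d e f) ^ k := by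
    simpa using congrArg (proj p d e f) h
  have hbik : M1b p d e f ^ i = M1b p d e f ^ k := by
    rw [hb]
    simpa [← ofAdd_nsmul, ZMod.natCast_eq_natCast_iff] using hproj
  exact ⟨hbik, mul_left_cancel (hbik ▸ h)⟩

theorem b_pow_mul_a_zpow_pow_eq_one_iff (hp : p.Prime) (hodd : Odd p) (hf : 0 < f)
    (hedf : e ≤ d + f) (i n : ℕ) (j : ℤ) :
    (M1b p d e f ^ i * M1a p d e f ^ j) ^ p ^ n = 1 ↔
      (p : ℤ) ^ d ∣ i * (p : ℤ) ^ n ∧ (p : ℤ) ^ e ∣ j * (p : ℤ) ^ n := by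
  have hQ : (p : ℤ) ∣ (1 + (p : ℤ) ^ f) ^ i - 1 :=
    (dvd_pow_self _ hf.ne').trans (by simpa using sub_one_dvd_pow_sub_one (1 + (p : ℤ) ^ f) i)
  have hnormal := b_pow_mul_a_zpow_eq_iff hp hodd hf hedf (i * p ^ n) 0
    (j * ∑ k ∈ Finset.range (p ^ n), ((1 + (p : ℤ) ^ f) ^ i) ^ k) 0
  rw [pow_zero, zpow_zero, one_mul, Nat.modEq_zero_iff_dvd, Int.modEq_zero_iff_dvd,
    natCast_pow_dvd_mul_geom_sum_iff hodd hQ, ← pow_mul_zpow_pow a_mul_b,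
    ← Int.natCast_dvd_natCast] at hnormal
  exact_mod_cast hnormal

theorem mul_eq_mul_zpow_iff (hp : p.Prime) (hodd : Odd p) (hf : 0 < f) (hedf : e ≤ d + f)
    (r t : ℕ) (s u : ℤ) (hu : (p : ℤ) ^ e ∣ u * (p : ℤ) ^ d) :
    M1b p d e f ^ r * M1a p d e f ^ s * (M1b p d e f ^ t * M1a p d e f ^ u) =
        M1b p d e f ^ t * M1a p d e f ^ u *
          (M1b p d e f ^ r * M1a p d e f ^ s) ^ (1 + (p : ℤ) ^ f) ↔
      (p : ℤ) ^ d ∣ r * (p : ℤ) ^ f ∧ (p : ℤ) ^ e ∣ s * ((p : ℤ) ^ f * (t - 1)) := by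
  have hpow : (M1b p d e f ^ r * M1a p d e f ^ s) ^ (1 + (p : ℤ) ^ f) =
      M1b p d e f ^ (r * (1 + p ^ f)) * M1a p d e f ^
        (s * ∑ k ∈ Finset.range (1 + p ^ f), ((1 + (p : ℤ) ^ f) ^ r) ^ k) := by
    rw [← pow_mul_zpow_pow a_mul_b]
    exact mod_cast zpow_natCast (M1b p d e f ^ r * M1a p d e f ^ s) (1 + p ^ f)
  have hbexp : r + t ≡ t + r * (1 + p ^ f) [MOD p ^ d] ↔ (p : ℤ) ^ d ∣ r * (p : ℤ) ^ f := by
    rw [Nat.modEq_iff_dvd]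
    push_cast
    ring_nf
  rw [hpow, pow_mul_zpow_mul_pow_mul_zpow a_mul_b, pow_mul_zpow_mul_pow_mul_zpow a_mul_b,
    b_pow_mul_a_zpow_eq_iff hp hodd hf hedf, hbexp]
  exact and_congr_right fun hr => mul_one_add_pow_add_modEq_iff hp hodd hf hedf hr hu s t

theorem satisfiesRelations_pow_iff (hp : p.Prime) (hodd : Odd p) (hf : 0 < f) (hde : d ≤ e)
    (hedf : e ≤ d + f) (r t : ℕ) (s u : ℤ) :
    SatisfiesRelations p d e f
        (M1b p d e f ^ r * M1a p d e f ^ s) (M1b p d e f ^ t * M1a p d e f ^ u) ↔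
      (p : ℤ) ^ d ∣ r * (p : ℤ) ^ f ∧ (p : ℤ) ^ e ∣ u * (p : ℤ) ^ d ∧
        (p : ℤ) ^ e ∣ s * ((p : ℤ) ^ f * (t - 1)) := by
  have hx := (b_pow_mul_a_zpow_pow_eq_one_iff hp hodd hf hedf r e s).mpr
    ⟨(pow_dvd_pow _ hde).mul_left _, dvd_mul_left _ _⟩
  have hy := b_pow_mul_a_zpow_pow_eq_one_iff hp hodd hf hedf t d u
  rw [and_iff_right (dvd_mul_left _ _)] at hy
  rw [SatisfiesRelations, and_iff_right hx, hy, and_left_comm]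
  exact and_congr_right (mul_eq_mul_zpow_iff hp hodd hf hedf r t s u)

theorem exists_b_zpow_eq_pow (hp : p ≠ 0) (n : ℤ) :
    ∃ m : ℕ, m ≡ n [ZMOD (p : ℤ) ^ d] ∧ M1b p d e f ^ n = M1b p d e f ^ m := by
  obtain ⟨m, hm⟩ := Int.eq_ofNat_of_zero_le (Int.emod_nonneg n (b := (p : ℤ) ^ d) (by positivity))
  have hmod : m ≡ n [ZMOD (p : ℤ) ^ d] := hm ▸ Int.mod_modEq n _
  refine ⟨m, hmod, ?_⟩
  rw [← zpow_natCast, zpow_eq_zpow_iff_modEq, orderOf_b, Nat.cast_pow]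
  exact hmod.symm

theorem satisfiesRelations_zpow_iff (hp : p.Prime) (hodd : Odd p) (hf : 0 < f) (hde : d ≤ e)
    (hedf : e ≤ d + f) (r s t u : ℤ) :
    SatisfiesRelations p d e f
        (M1b p d e f ^ r * M1a p d e f ^ s) (M1b p d e f ^ t * M1a p d e f ^ u) ↔
      (p : ℤ) ^ d ∣ r * (p : ℤ) ^ f ∧ (p : ℤ) ^ e ∣ u * (p : ℤ) ^ d ∧
        (p : ℤ) ^ e ∣ s * ((p : ℤ) ^ f * (t - 1)) := by
  obtain ⟨r', hr, hbr⟩ := exists_b_zpow_eq_pow (d := d) (e := e) (f := f) hp.ne_zero r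
  obtain ⟨t', ht, hbt⟩ := exists_b_zpow_eq_pow (d := d) (e := e) (f := f) hp.ne_zero t
  have hr_iff : (p : ℤ) ^ d ∣ r * (p : ℤ) ^ f ↔ (p : ℤ) ^ d ∣ r' * (p : ℤ) ^ f :=
    dvd_iff_dvd_of_dvd_sub (by simpa [sub_mul] using hr.dvd.mul_right ((p : ℤ) ^ f))
  have ht_iff : (p : ℤ) ^ e ∣ s * ((p : ℤ) ^ f * (t - 1)) ↔
      (p : ℤ) ^ e ∣ s * ((p : ℤ) ^ f * (t' - 1)) := by
    refine dvd_iff_dvd_of_dvd_sub ?_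
    have hft : (p : ℤ) ^ (d + f) ∣ (t - t') * (p : ℤ) ^ f :=
      pow_add (p : ℤ) d f ▸ mul_dvd_mul_right ht.dvd _
    convert ((pow_dvd_pow _ hedf).trans hft).mul_left s using 1
    ring
  rw [hbr, hbt, hr_iff, ht_iff]
  exact satisfiesRelations_pow_iff hp hodd hf hde hedf r' t' s u

theorem exists_mulAut_iff_dvd (hp : p.Prime) (hodd : Odd p) (hd : 0 < d) (hf : 0 < f) (hde : d ≤ e)
    (hedf : e ≤ d + f) (r s t u : ℤ) :
    (∃ φ : MulAut (M1 p d e f),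
        φ (M1a p d e f) = M1b p d e f ^ r * M1a p d e f ^ s ∧
        φ (M1b p d e f) = M1b p d e f ^ t * M1a p d e f ^ u) ↔
      (p : ℤ) ^ (d - f) ∣ r ∧ (p : ℤ) ^ (e - d) ∣ u ∧ (p : ℤ) ^ (e - f) ∣ s * (t - 1) ∧
        ¬ (p : ℤ) ∣ r * u - s * t := by
  have hp0 : (p : ℤ) ≠ 0 := Nat.cast_ne_zero.mpr hp.ne_zero
  have hcomm : s * ((p : ℤ) ^ f * (t - 1)) = s * (t - 1) * (p : ℤ) ^ f := by ring
  rw [exists_mulAut_iff hp.ne_zero, satisfiesRelations_zpow_iff hp hodd hf hde hedf,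
    closure_pair_eq_top_iff hp hd (hd.trans_le hde) hf, hcomm]
  simp only [pow_dvd_mul_pow_iff_pow_sub_dvd hp0, and_assoc]

end M1

/-- For `G = M₁(p,d,e,f)` (`d ≤ e`, `f ≤ e ≤ d + f`) with canonical
generators `a, b` and integers `r, s, t, u`, the assignment `a ↦ bʳaˢ, b ↦ bᵗaᵘ` extends to
an automorphism of `G` iff one of the five listed numerical conditions holds. -/
theorem stmt_11 (p d e f : ℕ) (hp : p.Prime) (hodd : Odd p)
    (hd : 0 < d) (hf : 0 < f) (hde : d ≤ e) (hfe : f ≤ e) (hedf : e ≤ d + f)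
    (r s t u : ℤ) :
    (∃ φ : MulAut (M1 p d e f),
        φ (M1a p d e f) = M1b p d e f ^ r * M1a p d e f ^ s ∧
        φ (M1b p d e f) = M1b p d e f ^ t * M1a p d e f ^ u) ↔
      ((f = e ∧ e = d ∧ ¬ (p : ℤ) ∣ (r * u - s * t)) ∨
       (f < e ∧ e = d ∧ (p : ℤ) ^ (e - f) ∣ r ∧ (p : ℤ) ^ (e - f) ∣ (t - 1) ∧ ¬ (p : ℤ) ∣ s) ∨
       (d < f ∧ f = e ∧ (p : ℤ) ^ (e - d) ∣ u ∧ ¬ (p : ℤ) ∣ s * t) ∨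
       (d ≤ f ∧ f < e ∧ (p : ℤ) ^ (e - d) ∣ u ∧ (p : ℤ) ^ (e - f) ∣ (t - 1) ∧ ¬ (p : ℤ) ∣ s) ∨
       (f < d ∧ d < e ∧ (p : ℤ) ^ (d - f) ∣ r ∧ (p : ℤ) ^ (e - d) ∣ u ∧
         (p : ℤ) ^ (e - f) ∣ (t - 1) ∧ ¬ (p : ℤ) ∣ s)) := by
  have hpZ : Prime (p : ℤ) := Nat.prime_iff_prime_int.mp hp
  rw [M1.exists_mulAut_iff_dvd hp hodd hd hf hde hedf]
  by_cases hall : f = e ∧ e = d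
  · obtain ⟨rfl, rfl⟩ := hall
    simp
  have hru (hr : (p : ℤ) ^ (d - f) ∣ r) (hu : (p : ℤ) ^ (e - d) ∣ u) : (p : ℤ) ∣ r * u := by
    rcases lt_or_ge f d with hfd | hdf
    · exact ((dvd_pow_self _ (by omega)).trans hr).mul_right u
    · exact ((dvd_pow_self _ (by omega)).trans hu).mul_left r
  rw [and_congr_right fun hr => and_congr_right fun hu =>
    pow_dvd_mul_sub_one_and_not_dvd_sub_iff hpZ (hru hr hu) (e - f)]
  rcases hfe.lt_or_eq with hfe' | rfl
  · rw [pow_dvd_sub_one_and_not_dvd_mul_iff hpZ (Nat.sub_pos_of_lt hfe')]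
    rcases hde.lt_or_eq with hde' | rfl
    · rcases le_or_gt d f with hdf | hfd
      · simp [hfe', hfe'.ne, hde'.ne', hdf, hdf.not_gt, Nat.sub_eq_zero_of_le hdf]
      · simp [hfe', hfe'.ne, hde', hde'.ne', hfd, hfd.not_ge]
    · simp [hfe', hfe'.ne, hfe'.not_ge]
  · have hdf : d < f := lt_of_le_of_ne hde fun h => hall ⟨rfl, h.symm⟩
    simp [hdf, hdf.ne', hdf.not_gt, Nat.sub_eq_zero_of_le hdf.le]
end
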